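/- arXiv:1812.08480 — 2 statements merged into one kernel-verified Lean document; each statement's English description precedes it below -/
import Mathlib

section
/- There is a constant C > 0 such that for every n ≥ 4, with q = n − ⌈n/log₂ n⌉, there exists a finitely supported probability distribution D over deterministic strategies for the HiddenPermutation problem with n positions such that for every secret (z,π) ∈ {0,1}^n × S_n, the expected value (over g ∼ D) of the least T such that every secret (z',π') consistent with the guessing history produced by g against (z,π) in its first T queries satisfies π'(j) = π(j) and z'_{π(j)} = z_{π(j)} for all j ≤ q, is at most C·n·log₂ log₂ n. -/
/-- The score `f_{z,π}(x)`: the length of the longest common prefix of `x` and `z`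
in the order imposed by `π` (positions are 0-indexed, so `π j` for `(j : ℕ) < i`
corresponds to the 1-indexed positions `π(1),…,π(i)`). -/
def score (n : ℕ) (z : Fin n → Bool) (π : Equiv.Perm (Fin n)) (x : Fin n → Bool) : ℕ :=
  Nat.findGreatest (fun i => ∀ j : Fin n, (j : ℕ) < i → z (π j) = x (π j)) n

/-- The list of scores produced in the first `k` queries when the deterministic
strategy `g` plays against the secret `(z, π)`. -/
def histScores (n : ℕ) (g : List ℕ → Fin n → Bool) (z : Fin n → Bool)
    (π : Equiv.Perm (Fin n)) : ℕ → List ℕ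
  | 0 => []
  | k + 1 => histScores n g z π k ++ [score n z π (g (histScores n g z π k))]

/-- `(z, π)` is the unique secret consistent with the guessing history produced by the
deterministic strategy `g` against `(z, π)` in its first `T` queries. -/
def Identifies (n : ℕ) (g : List ℕ → Fin n → Bool) (z : Fin n → Bool)
    (π : Equiv.Perm (Fin n)) (T : ℕ) : Prop :=
  ∀ (z' : Fin n → Bool) (π' : Equiv.Perm (Fin n)),
    (∀ k < T, score n z' π' (g (histScores n g z π k)) =
        score n z π (g (histScores n g z π k))) →
    z' = z ∧ π' = π


open scoped ENNReal

/-- Every secret consistent with the guessing history produced by `g` against `(z,π)` in its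
first `T` queries agrees with `(z,π)` on the first `q` positions: `π'(j) = π(j)` and
`z'_{π(j)} = z_{π(j)}` for all (1-indexed) `j ≤ q`. -/
def IdentifiesPrefix (n : ℕ) (g : List ℕ → Fin n → Bool) (z : Fin n → Bool)
    (π : Equiv.Perm (Fin n)) (q T : ℕ) : Prop :=
  ∀ (z' : Fin n → Bool) (π' : Equiv.Perm (Fin n)),
    (∀ k < T, score n z' π' (g (histScores n g z π k)) =
        score n z π (g (histScores n g z π k))) →
    ∀ j : Fin n, (j : ℕ) < q → π' j = π j ∧ z' (π j) = z (π j)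

/-- The least `T` such that after `T` queries of `g` against `(z,π)` the first `q` values of
the permutation and the corresponding bits are determined; `∞` if no such `T` exists. -/
noncomputable def timeToPrefix (n : ℕ) (g : List ℕ → Fin n → Bool) (z : Fin n → Bool)
    (π : Equiv.Perm (Fin n)) (q : ℕ) : ℕ∞ :=
  sInf {T : ℕ∞ | ∃ m : ℕ, T = (m : ℕ∞) ∧ IdentifiesPrefix n g z π q m}


namespace HP

abbrev Secret (n : ℕ) := (Fin n → Bool) × Equiv.Perm (Fin n)

/-- There is a strategy which, knowing that the secret lies in `S`, identifies the first `q`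
positions with total (over `S`) number of queries at most `∑ f`. -/
def Good (n q : ℕ) (S : Finset (Secret n)) (f : Secret n → ℕ) : Prop :=
  ∃ (g : List ℕ → Fin n → Bool) (τ : Secret n → ℕ),
    (∀ s ∈ S, ∀ s' ∈ S,
      (∀ k < τ s, score n s'.1 s'.2 (g (histScores n g s.1 s.2 k)) =
        score n s.1 s.2 (g (histScores n g s.1 s.2 k))) →
      ∀ j : Fin n, (j : ℕ) < q → s'.2 j = s.2 j ∧ s'.1 (s.2 j) = s.1 (s.2 j)) ∧
    ∑ s ∈ S, τ s ≤ ∑ s ∈ S, f s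

variable {n q : ℕ}

lemma good_sum {S : Finset (Secret n)} {f f' : Secret n → ℕ} (h : Good n q S f)
    (hf : ∑ s ∈ S, f s ≤ ∑ s ∈ S, f' s) : Good n q S f' := by
  obtain ⟨g, τ, h1, h2⟩ := h
  exact ⟨g, τ, h1, h2.trans hf⟩

lemma good_mono {S : Finset (Secret n)} {f f' : Secret n → ℕ} (h : Good n q S f)
    (hf : ∀ s ∈ S, f s ≤ f' s) : Good n q S f' :=
  good_sum h (Finset.sum_le_sum hf)

lemma good_ident {S : Finset (Secret n)} {f : Secret n → ℕ}
    (h : ∀ s ∈ S, ∀ s' ∈ S, ∀ j : Fin n, (j : ℕ) < q →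
      s'.2 j = s.2 j ∧ s'.1 (s.2 j) = s.1 (s.2 j)) : Good n q S f :=
  ⟨fun _ _ => false, fun _ => 0, fun s hs s' hs' _ => h s hs s' hs', by simp⟩

lemma good_empty {f : Secret n → ℕ} : Good n q ∅ f :=
  good_ident (by simp)

/-- Strategy which first queries `x` and then continues according to the first answer. -/
def consStrat (x : Fin n → Bool) (G : ℕ → List ℕ → Fin n → Bool) : List ℕ → Fin n → Bool
  | [] => x
  | a :: l => G a l

lemma hist_cons (x : Fin n → Bool) (G : ℕ → List ℕ → Fin n → Bool) (z : Fin n → Bool)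
    (π : Equiv.Perm (Fin n)) (k : ℕ) :
    histScores n (consStrat x G) z π (k + 1) =
      score n z π x :: histScores n (G (score n z π x)) z π k := by
  induction k with
  | zero => simp [histScores, consStrat]
  | succ k ih =>
    rw [histScores, ih]
    simp [histScores, consStrat]

lemma good_query {S : Finset (Secret n)} {f : Secret n → ℕ} (x : Fin n → Bool) (φ : ℕ → ℕ)
    (h : ∀ k, Good n q (S.filter (fun s => φ (score n s.1 s.2 x) = k)) f) :
    Good n q S (fun s => f s + 1) := by
  choose g τ h1 h2 using h
  refine ⟨consStrat x (fun a => g (φ a)), fun s => τ (φ (score n s.1 s.2 x)) s + 1, ?_, ?_⟩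
  · intro s hs s' hs' hk
    have h0 := hk 0 (Nat.succ_pos _)
    simp only [histScores, consStrat] at h0
    refine h1 (φ (score n s.1 s.2 x)) s (by simp [hs]) s' (by simp [hs', h0]) ?_
    intro k hk'
    have := hk (k + 1) (Nat.succ_lt_succ hk')
    rw [hist_cons] at this
    simpa only [consStrat] using this
  · simp only [Finset.sum_add_distrib]
    refine Nat.add_le_add_right ?_ _
    have hm : ∀ s ∈ S, φ (score n s.1 s.2 x) ∈ S.image (fun s => φ (score n s.1 s.2 x)) :=
      fun s hs => Finset.mem_image_of_mem _ hs
    rw [← Finset.sum_fiberwise_of_maps_to hm, ← Finset.sum_fiberwise_of_maps_to hm f]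
    refine Finset.sum_le_sum fun k _ => ?_
    refine le_trans (le_of_eq ?_) (h2 k)
    refine Finset.sum_congr rfl fun s hs => ?_
    rw [(Finset.mem_filter.1 hs).2]

lemma le_score_iff (z : Fin n → Bool) (π : Equiv.Perm (Fin n)) (x : Fin n → Bool) {k : ℕ}
    (hk : k ≤ n) : k ≤ score n z π x ↔ ∀ j : Fin n, (j : ℕ) < k → z (π j) = x (π j) := by
  unfold score
  constructor
  · intro h j hj
    have := Nat.findGreatest_spec (P := fun i => ∀ j : Fin n, (j : ℕ) < i → z (π j) = x (π j))
      (n := n) (Nat.zero_le n) (by simp)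
    exact this j (lt_of_lt_of_le hj h)
  · intro h
    exact Nat.le_findGreatest hk h

/-- Secrets described by candidate sets `V i` for the first `t` positions and bits `c`. -/
def Sset (t : ℕ) (V : ℕ → Finset (Fin n)) (c : Fin n → Bool) : Finset (Secret n) :=
  Finset.univ.filter (fun s => ∀ i : Fin n, (i : ℕ) < t → s.2 i ∈ V i ∧ s.1 (s.2 i) = c (s.2 i))

lemma mem_Sset {t : ℕ} {V : ℕ → Finset (Fin n)} {c : Fin n → Bool} {s : Secret n} :
    s ∈ Sset t V c ↔ ∀ i : Fin n, (i : ℕ) < t → s.2 i ∈ V i ∧ s.1 (s.2 i) = c (s.2 i) := by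
  simp [Sset]

/-- Pairwise disjointness of the first `t` candidate sets. -/
def Dis (t : ℕ) (V : ℕ → Finset (Fin n)) : Prop :=
  ∀ i < t, ∀ j < t, ∀ r, r ∈ V i → r ∈ V j → i = j

lemma Dis.mono {t : ℕ} {V V' : ℕ → Finset (Fin n)} (h : Dis t V) (hs : ∀ i < t, V' i ⊆ V i) :
    Dis t V' := fun i hi j hj r hr hr' => h i hi j hj r (hs i hi hr) (hs j hj hr')

/-- Candidate sets after a split query whose (truncated) score is `k`. -/
def splitV (V F : ℕ → Finset (Fin n)) (k : ℕ) : ℕ → Finset (Fin n) :=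
  fun j => if j < k then V j \ F j else if j = k then F j else V j

lemma splitV_sub {t : ℕ} {V F : ℕ → Finset (Fin n)} (hF : ∀ i < t, F i ⊆ V i) (k : ℕ) :
    ∀ i < t, splitV V F k i ⊆ V i := by
  intro i hi
  unfold splitV
  split_ifs
  · exact Finset.sdiff_subset
  · exact hF i hi
  · exact subset_rfl

open Classical in
lemma good_split {t : ℕ} {V F : ℕ → Finset (Fin n)} {c : Fin n → Bool} (ht : t ≤ n)
    (hV : Dis t V) (hF : ∀ i < t, F i ⊆ V i) (Y : Finset (Secret n)) {f : Secret n → ℕ}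
    (h : ∀ k ≤ t, Good n q (Sset t (splitV V F k) c ∩ Y) f) :
    Good n q (Sset t V c ∩ Y) (fun s => f s + 1) := by
  let x : Fin n → Bool := fun r => if ∃ i < t, r ∈ F i then !(c r) else c r
  refine good_query x (fun a => min a t) ?_
  intro k
  by_cases hk : k ≤ t
  swap
  · rw [Finset.filter_false_of_mem]
    · exact good_empty
    · intro s _ hs
      have : min (score n s.1 s.2 x) t ≤ t := min_le_right _ _
      omega
  convert h k hk using 1
  have hmatch : ∀ s ∈ Sset t V c, ∀ j : Fin n, (j : ℕ) < t →
      (s.1 (s.2 j) = x (s.2 j) ↔ s.2 j ∉ F j) := by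
    intro s hs j hj
    obtain ⟨h1, h2⟩ := mem_Sset.1 hs j hj
    have : (∃ i < t, s.2 j ∈ F i) ↔ s.2 j ∈ F j := by
      constructor
      · rintro ⟨i, hi, hi'⟩
        rwa [hV i hi j hj _ (hF i hi hi') h1] at hi'
      · exact fun h => ⟨j, hj, h⟩
    simp only [x, this]
    by_cases hm : s.2 j ∈ F j <;> simp [hm, h2]
  have hle : ∀ s ∈ Sset t V c, ∀ k ≤ t, (k ≤ score n s.1 s.2 x ↔
      ∀ j : Fin n, (j : ℕ) < k → s.2 j ∉ F j) := by
    intro s hs k hk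
    rw [le_score_iff _ _ _ (hk.trans ht)]
    refine forall_congr' fun j => forall_congr' fun hj => ?_
    exact hmatch s hs j (lt_of_lt_of_le hj hk)
  ext s
  simp only [Finset.mem_filter, Finset.mem_inter]
  constructor
  · rintro ⟨⟨hs, hY⟩, hk'⟩
    refine ⟨?_, hY⟩
    rw [mem_Sset]
    intro i hi
    have hs' := mem_Sset.1 hs i hi
    refine ⟨?_, hs'.2⟩
    unfold splitV
    split_ifs with h1 h2
    · rw [Finset.mem_sdiff]
      refine ⟨hs'.1, ?_⟩
      exact (hle s hs k hk).1 (by omega) i h1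
    · by_contra hc
      have h3 : ¬ (k + 1 ≤ score n s.1 s.2 x) := by omega
      rw [hle s hs (k + 1) (by omega)] at h3
      apply h3
      intro j hj
      by_cases hjk : (j : ℕ) = k
      · have : j = i := Fin.ext (by omega)
        rw [this]; exact hc
      · exact (hle s hs k hk).1 (by omega) j (by omega)
    · exact hs'.1
  · rintro ⟨hs, hY⟩
    have hs0 : s ∈ Sset t V c := by
      rw [mem_Sset] at hs ⊢
      intro i hi
      exact ⟨splitV_sub hF k i hi (hs i hi).1, (hs i hi).2⟩
    refine ⟨⟨hs0, hY⟩, ?_⟩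
    rw [mem_Sset] at hs
    have h1 : k ≤ score n s.1 s.2 x := by
      rw [hle s hs0 k hk]
      intro j hj
      have := (hs j (by omega)).1
      simp only [splitV, hj, if_true, Finset.mem_sdiff] at this
      exact this.2
    by_cases hkt : k = t
    · omega
    · have h2 : ¬ (k + 1 ≤ score n s.1 s.2 x) := by
        rw [hle s hs0 (k + 1) (by omega)]
        intro hc
        have hkn : k < n := by omega
        have := (hs ⟨k, hkn⟩ (by simp; omega)).1
        simp only [splitV, lt_irrefl, if_false, if_true] at this
        exact hc ⟨k, hkn⟩ (by simp) this
      omega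

open Classical in
lemma good_flip {t : ℕ} (ht : t < n) {V : ℕ → Finset (Fin n)} {c : Fin n → Bool}
    {Y : Finset (Secret n)} (hY : Y ⊆ Sset t V c) (G : Finset (Fin n))
    (hG : ∀ i < t, ∀ r ∈ V i, r ∉ G) {f : Secret n → ℕ}
    (h1 : Good n q (Y.filter (fun s => s.1 (s.2 ⟨t, ht⟩) =
      xor (c (s.2 ⟨t, ht⟩)) (decide (s.2 ⟨t, ht⟩ ∈ G)))) f)
    (h2 : Good n q (Y.filter (fun s => ¬ s.1 (s.2 ⟨t, ht⟩) =
      xor (c (s.2 ⟨t, ht⟩)) (decide (s.2 ⟨t, ht⟩ ∈ G)))) f) :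
    Good n q Y (fun s => f s + 1) := by
  let x : Fin n → Bool := fun r => xor (c r) (decide (r ∈ G))
  refine good_query x (fun a => if t < a then 1 else 0) ?_
  have key : ∀ s ∈ Y, (t < score n s.1 s.2 x ↔ s.1 (s.2 ⟨t, ht⟩) =
      xor (c (s.2 ⟨t, ht⟩)) (decide (s.2 ⟨t, ht⟩ ∈ G))) := by
    intro s hs
    have hs' := mem_Sset.1 (hY hs)
    rw [← Nat.succ_le_iff, le_score_iff _ _ _ (by omega)]
    constructor
    · intro h
      exact h ⟨t, ht⟩ (by simp)
    · intro h j hj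
      by_cases hjt : (j : ℕ) = t
      · have : j = ⟨t, ht⟩ := Fin.ext hjt
        rw [this]; exact h
      · have := hs' j (by omega)
        have hg := hG j (by omega) _ this.1
        simp [x, hg, this.2]
  intro k
  by_cases hk1 : k = 1
  · subst hk1
    convert h1 using 1
    refine Finset.filter_congr fun s hs => ?_
    rw [← key s hs]
    simp
  by_cases hk0 : k = 0
  · subst hk0
    convert h2 using 1
    refine Finset.filter_congr fun s hs => ?_
    rw [← key s hs]
    simp
  · rw [Finset.filter_false_of_mem]
    · exact good_empty
    · intro s _ hs
      split_ifs at hs <;> omega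


/-! ### Counting -/

open Classical in
lemma card_single_le {t : ℕ} (ht : t ≤ n) {V : ℕ → Finset (Fin n)} (c : Fin n → Bool)
    (hV : Dis t V) {i : ℕ} (hi : i < t) {v w : Fin n} (hv : v ∈ V i) (hw : w ∈ V i) :
    (Sset t (Function.update V i {v}) c).card ≤ (Sset t (Function.update V i {w}) c).card := by
  refine Finset.card_le_card_of_injOn
    (fun s => (fun r => xor (s.1 (Equiv.swap v w r)) (xor (c r) (c (Equiv.swap v w r))),
      s.2.trans (Equiv.swap v w))) ?_ ?_
  · intro s hs
    have hs := mem_Sset.1 (Finset.mem_coe.1 hs)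
    refine Finset.mem_coe.2 (mem_Sset.2 ?_)
    intro j hj
    have h := hs j hj
    by_cases hji : (j : ℕ) = i
    · subst hji
      simp only [Function.update_self, Finset.mem_singleton] at h
      obtain ⟨ha, hb⟩ := h
      rw [ha] at hb
      simp only [Function.update_self, Equiv.trans_apply, ha, Equiv.swap_apply_left,
        Finset.mem_singleton, Equiv.swap_apply_right, hb, true_and]
      cases c v <;> cases c w <;> rfl
    · rw [Function.update_of_ne hji] at h
      have h1 : s.2 j ≠ v := fun hc => hji (hV j hj i hi _ h.1 (hc ▸ hv))
      have h2 : s.2 j ≠ w := fun hc => hji (hV j hj i hi _ h.1 (hc ▸ hw))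
      rw [Function.update_of_ne hji]
      simp [Equiv.swap_apply_of_ne_of_ne h1 h2, h.1, h.2]
  · intro s _ s' _ he
    simp only [Prod.mk.injEq] at he
    obtain ⟨he1, he2⟩ := he
    refine Prod.ext ?_ ?_
    · funext r
      have := congrFun he1 (Equiv.swap v w r)
      simpa using this
    · ext r
      have := congrArg (fun p : Equiv.Perm (Fin n) => Equiv.swap v w (p r)) he2
      simp at this
      rw [this]

open Classical in
lemma card_update {t : ℕ} (ht : t ≤ n) {V : ℕ → Finset (Fin n)} (c : Fin n → Bool)
    (hV : Dis t V) {i : ℕ} (hi : i < t) {W : Finset (Fin n)} (hW : W ⊆ V i) :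
    (Sset t (Function.update V i W) c).card * (V i).card = W.card * (Sset t V c).card := by
  have hin : i < n := by omega
  rcases (V i).eq_empty_or_nonempty with he | ⟨v, hv⟩
  · have : W = ∅ := by rw [he] at hW; exact Finset.subset_empty.1 hW
    simp [he, this]
  have key : ∀ W ⊆ V i, (Sset t (Function.update V i W) c).card =
      W.card * (Sset t (Function.update V i {v}) c).card := by
    intro W hW
    rw [Finset.card_eq_sum_card_fiberwise (f := fun s : Secret n => s.2 ⟨i, hin⟩) (t := W)]
    · rw [Finset.sum_const_nat (m := (Sset t (Function.update V i {v}) c).card)]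
      intro w hw
      have : ({s ∈ Sset t (Function.update V i W) c | s.2 ⟨i, hin⟩ = w}) =
          Sset t (Function.update V i {w}) c := by
        ext s
        simp only [Finset.mem_filter, mem_Sset]
        constructor
        · rintro ⟨h1, h2⟩ j hj
          by_cases hji : (j : ℕ) = i
          · have : j = ⟨i, hin⟩ := Fin.ext hji
            have h := h1 j hj
            subst this
            simp [h2]
            simpa [h2] using h.2
          · have h := h1 j hj
            rw [Function.update_of_ne hji] at h ⊢
            exact h
        · intro h1
          have h0 := h1 ⟨i, hin⟩ hi
          simp only [Function.update_self, Finset.mem_singleton] at h0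
          refine ⟨?_, h0.1⟩
          intro j hj
          have h := h1 j hj
          by_cases hji : (j : ℕ) = i
          · have : j = ⟨i, hin⟩ := Fin.ext hji
            subst this
            simp only [Function.update_self]
            exact ⟨h0.1 ▸ hw, h0.2⟩
          · rw [Function.update_of_ne hji] at h ⊢
            exact h
      rw [this]
      exact le_antisymm (card_single_le ht c hV hi (hW hw) hv)
        (card_single_le ht c hV hi hv (hW hw))
    · intro s hs
      have := (mem_Sset.1 (Finset.mem_coe.1 hs) ⟨i, hin⟩ hi).1
      simpa using this
  have h1 := key W hW
  have h2 := key (V i) subset_rfl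
  rw [Function.update_eq_self] at h2
  rw [h1, h2]
  ring

open Classical in
lemma card_none {t : ℕ} (ht : t ≤ n) {V F : ℕ → Finset (Fin n)} (c : Fin n → Bool)
    (hV : Dis t V) (hF : ∀ i < t, F i ⊆ V i) (m : ℕ) (I : Finset ℕ)
    (hI : ∀ i ∈ I, i < t ∧ (V i).card ≤ m * (F i).card) :
    (Sset t (fun j => if j ∈ I then V j \ F j else V j) c).card * m ^ I.card ≤
      (m - 1) ^ I.card * (Sset t V c).card := by
  induction I using Finset.induction_on with
  | empty => simp
  | insert i I hiI ih =>
    have ih := ih (fun j hj => hI j (Finset.mem_insert_of_mem hj))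
    obtain ⟨hi, hm⟩ := hI i (Finset.mem_insert_self _ _)
    set W : ℕ → Finset (Fin n) := fun j => if j ∈ I then V j \ F j else V j with hWdef
    have hWi : W i = V i := by simp [hWdef, hiI]
    have hW : Dis t W := hV.mono (fun j _ => by
      simp only [hWdef]; split_ifs
      · exact Finset.sdiff_subset
      · exact subset_rfl)
    have heq : (fun j => if j ∈ insert i I then V j \ F j else V j) =
        Function.update W i (V i \ F i) := by
      funext j
      by_cases hj : j = i
      · subst hj; simp
      · rw [Function.update_of_ne hj]; simp [hWdef, hj]
    rw [heq, Finset.card_insert_of_notMem hiI]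
    have h1 := card_update ht c hW hi (W := V i \ F i) (by rw [hWi]; exact Finset.sdiff_subset)
    rw [hWi, Finset.card_sdiff_of_subset (hF i hi)] at h1
    rcases Nat.eq_zero_or_pos (V i).card with h0 | hpos
    · have : Sset t (Function.update W i (V i \ F i)) c = ∅ := by
        rw [Finset.eq_empty_iff_forall_notMem]
        intro s hs
        have := (mem_Sset.1 hs ⟨i, by omega⟩ hi).1
        simp [Finset.card_eq_zero.1 h0] at this
      rw [this]; simp
    · have h2 : ((V i).card - (F i).card) * m ≤ (m - 1) * (V i).card := by
        rcases m with _ | m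
        · simp
        · simp only [Nat.add_sub_cancel]
          rw [Nat.sub_mul]
          have : (V i).card * (m + 1) = m * (V i).card + (V i).card := by ring
          rw [mul_comm (m + 1)] at hm
          omega
      refine Nat.le_of_mul_le_mul_right ?_ hpos
      calc (Sset t (Function.update W i (V i \ F i)) c).card * m ^ (I.card + 1) * (V i).card
          = ((Sset t (Function.update W i (V i \ F i)) c).card * (V i).card) * m ^ I.card * m := by
            ring
        _ = (((V i).card - (F i).card) * m) * ((Sset t W c).card * m ^ I.card) := by rw [h1]; ring
        _ ≤ ((m - 1) * (V i).card) * ((m - 1) ^ I.card * (Sset t V c).card) :=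
            Nat.mul_le_mul h2 ih
        _ = _ := by ring

lemma two_mul_pow_le (m : ℕ) (hm : 1 ≤ m) : 2 * (m - 1) ^ m ≤ m ^ m := by
  obtain ⟨a, rfl⟩ : ∃ a, m = a + 1 := ⟨m - 1, by omega⟩
  simp only [Nat.add_sub_cancel]
  have h : ∀ k : ℕ, a ^ k * (a + k) ≤ (a + 1) ^ k * a := by
    intro k
    induction k with
    | zero => simp
    | succ k ih =>
      calc a ^ (k + 1) * (a + (k + 1)) ≤ (a + 1) * (a ^ k * (a + k)) := by
            have : (a + 1) * (a ^ k * (a + k)) = a ^ (k + 1) * (a + (k + 1)) + a ^ k * k := by ring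
            omega
        _ ≤ (a + 1) * ((a + 1) ^ k * a) := Nat.mul_le_mul_left _ ih
        _ = _ := by ring
  rcases Nat.eq_zero_or_pos a with rfl | ha
  · simp
  refine Nat.le_of_mul_le_mul_right ?_ ha
  refine le_trans ?_ (h (a + 1))
  have : a ^ (a + 1) * (a + (a + 1)) = 2 * a ^ (a + 1) * a + a ^ (a + 1) := by ring
  omega

open Classical in
/-- By symmetry, position `t` lies in `V i` with probability `(|V i| - 1) / (n - t)`. -/
lemma card_next {t : ℕ} (ht : t < n) {V : ℕ → Finset (Fin n)} (c : Fin n → Bool)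
    (hV : Dis t V) {i : ℕ} (hi : i < t) :
    (n - t) * ((Sset t V c).filter (fun s => s.2 ⟨t, ht⟩ ∈ V i)).card =
      ((V i).card - 1) * (Sset t V c).card := by
  let J : Finset (Fin n) := Finset.univ.filter (fun j => t ≤ (j : ℕ))
  have hJ : J.card = n - t := by
    have : J = Finset.Ici (⟨t, ht⟩ : Fin n) := by
      ext j; simp [J, Fin.le_def]
    rw [this, Fin.card_Ici]
  have hsym : ∀ j ∈ J, ((Sset t V c).filter (fun s => s.2 j ∈ V i)).card =
      ((Sset t V c).filter (fun s => s.2 ⟨t, ht⟩ ∈ V i)).card := by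
    intro j hj
    have hj : t ≤ (j : ℕ) := by simpa [J] using hj
    have hfix : ∀ k : Fin n, (k : ℕ) < t → Equiv.swap (⟨t, ht⟩ : Fin n) j k = k := by
      intro k hk
      refine Equiv.swap_apply_of_ne_of_ne ?_ ?_
      · intro h; rw [h] at hk; simp at hk
      · intro h; rw [h] at hk; omega
    have hmem : ∀ s ∈ Sset t V c,
        ((s.1, (Equiv.swap (⟨t, ht⟩ : Fin n) j).trans s.2) : Secret n) ∈ Sset t V c := by
      intro s hs
      rw [mem_Sset] at hs ⊢
      intro k hk
      simpa [hfix k hk] using hs k hk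
    refine Finset.card_bij' (fun s _ => (s.1, (Equiv.swap (⟨t, ht⟩ : Fin n) j).trans s.2))
      (fun s _ => (s.1, (Equiv.swap (⟨t, ht⟩ : Fin n) j).trans s.2)) ?_ ?_ ?_ ?_
    · intro s hs
      simp only [Finset.mem_filter] at hs ⊢
      exact ⟨hmem s hs.1, by simpa using hs.2⟩
    · intro s hs
      simp only [Finset.mem_filter] at hs ⊢
      exact ⟨hmem s hs.1, by simpa using hs.2⟩
    · intro s _
      refine Prod.ext rfl ?_
      ext k; simp
    · intro s _
      refine Prod.ext rfl ?_
      ext k; simp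
  have h1 : ∑ j ∈ J, ((Sset t V c).filter (fun s => s.2 j ∈ V i)).card =
      (n - t) * ((Sset t V c).filter (fun s => s.2 ⟨t, ht⟩ ∈ V i)).card := by
    rw [Finset.sum_const_nat hsym, hJ]
  rw [← h1]
  simp only [Finset.card_filter]
  rw [Finset.sum_comm, mul_comm]
  refine Finset.sum_const_nat ?_
  intro s hs
  rw [← Finset.card_filter]
  have hs := mem_Sset.1 hs
  have : (J.filter (fun j => s.2 j ∈ V i)) =
      ((V i).erase (s.2 ⟨i, by omega⟩)).map s.2.symm.toEmbedding := by
    ext j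
    simp only [Finset.mem_filter, Finset.mem_map_equiv, Equiv.symm_symm, Finset.mem_erase, J,
      Finset.mem_univ, true_and]
    constructor
    · rintro ⟨h1, h2⟩
      refine ⟨?_, h2⟩
      intro hc
      have := s.2.injective hc
      rw [this] at h1
      simp at h1
      omega
    · rintro ⟨h1, h2⟩
      refine ⟨?_, h2⟩
      by_contra hc
      push Not at hc
      have := hV j hc i hi _ (hs j hc).1 h2
      apply h1
      congr 1
      exact Fin.ext this
  rw [this, Finset.card_map, Finset.card_erase_of_mem (hs ⟨i, by omega⟩ hi).1]

/-! ### Refinement -/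

open Classical in
lemma good_refine {t : ℕ} (ht : t ≤ n) {c : Fin n → Bool} (Y : Finset (Secret n))
    {f : Secret n → ℕ} {i : ℕ} (hi : i < t) (k : ℕ) :
    ∀ {V : ℕ → Finset (Fin n)}, Dis t V →
    (∀ W ⊆ V i, (W.card - 1) * 2 ^ k ≤ (V i).card - 1 →
      Good n q (Sset t (Function.update V i W) c ∩ Y) f) →
    Good n q (Sset t V c ∩ Y) (fun s => f s + k) := by
  induction k with
  | zero =>
    intro V hV h
    have := h (V i) subset_rfl (by simp)
    rw [Function.update_eq_self] at this
    simpa using this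
  | succ k ih =>
    intro V hV h
    obtain ⟨A, hA, hAc⟩ := Finset.exists_subset_card_eq (s := V i) (n := ((V i).card + 1) / 2)
      (by omega)
    have hstep : ∀ W ⊆ V i, (W.card - 1) * 2 ≤ (V i).card - 1 →
        Good n q (Sset t (Function.update V i W) c ∩ Y) (fun s => f s + k) := by
      intro W hW hc
      refine ih (hV.mono ?_) ?_
      · intro j _
        by_cases hj : j = i
        · subst hj; simpa using hW
        · rw [Function.update_of_ne hj]
      · intro W' hW' hc'
        rw [Function.update_self] at hW' hc'
        rw [Function.update_idem]
        refine h W' (hW'.trans hW) ?_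
        calc (W'.card - 1) * 2 ^ (k + 1) = (W'.card - 1) * 2 ^ k * 2 := by ring
          _ ≤ (W.card - 1) * 2 := Nat.mul_le_mul_right _ hc'
          _ ≤ _ := hc
    refine good_split (F := Function.update (fun _ => ∅) i A) ht hV ?_ Y ?_
    · intro j _
      by_cases hj : j = i
      · subst hj; simpa using hA
      · rw [Function.update_of_ne hj]; simp
    · intro k' hk'
      rcases lt_trichotomy k' i with hlt | heq | hgt
      · have : Sset t (splitV V (Function.update (fun _ => ∅) i A) k') c = ∅ := by
          rw [Finset.eq_empty_iff_forall_notMem]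
          intro s hs
          have := (mem_Sset.1 hs ⟨k', by omega⟩ (by simp; omega)).1
          simp [splitV, Function.update_of_ne hlt.ne] at this
        rw [this, Finset.empty_inter]
        exact good_empty
      · subst heq
        have : splitV V (Function.update (fun _ => ∅) k' A) k' = Function.update V k' A := by
          funext j
          by_cases hj : j = k'
          · subst hj; simp [splitV]
          · simp [splitV, hj]
        rw [this]
        exact hstep A hA (by omega)
      · have hkt : k' = t ∨ k' < t := by omega
        rcases hkt with hkt | hkt
        · have : Sset t (splitV V (Function.update (fun _ => ∅) i A) k') c =
            Sset t (Function.update V i (V i \ A)) c := by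
            ext s
            rw [mem_Sset, mem_Sset]
            refine forall_congr' fun j => forall_congr' fun hj => ?_
            have : splitV V (Function.update (fun _ => ∅) i A) k' j =
              Function.update V i (V i \ A) j := by
              have hjk : (j : ℕ) < k' := by omega
              by_cases hji : (j : ℕ) = i
              · simp [splitV, hji, hgt]
              · simp [splitV, Function.update_of_ne hji, hjk]
            rw [this]
          rw [this]
          refine hstep _ Finset.sdiff_subset ?_
          rw [Finset.card_sdiff_of_subset hA]
          omega
        · have : Sset t (splitV V (Function.update (fun _ => ∅) i A) k') c = ∅ := by
            rw [Finset.eq_empty_iff_forall_notMem]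
            intro s hs
            have := (mem_Sset.1 hs ⟨k', by omega⟩ (by simp; omega)).1
            simp [splitV, Function.update_of_ne hgt.ne'] at this
          rw [this, Finset.empty_inter]
          exact good_empty

open Classical in
lemma good_settle {t : ℕ} (ht : t ≤ n) {c : Fin n → Bool} (Y : Finset (Secret n))
    {f : Secret n → ℕ} (lam : ℕ) (hlam : n ≤ 2 ^ lam) (J : Finset ℕ) :
    ∀ {V : ℕ → Finset (Fin n)}, (∀ j ∈ J, j < t) → Dis t V →
    (∀ V' : ℕ → Finset (Fin n), (∀ i, V' i ⊆ V i) → (∀ i, i ∉ J → V' i = V i) →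
      (∀ i ∈ J, (V' i).card ≤ 1) → Good n q (Sset t V' c ∩ Y) f) →
    Good n q (Sset t V c ∩ Y) (fun s => f s + lam * J.card) := by
  induction J using Finset.induction_on with
  | empty =>
    intro V _ _ h
    simpa using h V (fun _ => subset_rfl) (fun _ _ => rfl) (by simp)
  | insert j J hj ih =>
    intro V hJ hV h
    rw [Finset.card_insert_of_notMem hj]
    have hjt := hJ j (Finset.mem_insert_self _ _)
    have := good_refine (q := q) (f := fun s => f s + lam * J.card) ht Y hjt lam (c := c) hV (by
      intro W hW hc
      have hW1 : W.card ≤ 1 := by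
        by_contra hcon
        have h1 : 2 ^ lam ≤ (W.card - 1) * 2 ^ lam := Nat.le_mul_of_pos_left _ (by omega)
        have h2 : (V j).card ≤ n := by simpa using Finset.card_le_univ (V j)
        have h3 : W.card ≤ (V j).card := Finset.card_le_card hW
        omega
      have hsub : ∀ i, Function.update V j W i ⊆ V i := by
        intro i
        by_cases hi : i = j
        · subst hi; simpa using hW
        · rw [Function.update_of_ne hi]
      refine ih (fun i hi => hJ i (Finset.mem_insert_of_mem hi)) (hV.mono fun i _ => hsub i) ?_
      intro V' h1 h2 h3
      refine h V' (fun i => (h1 i).trans (hsub i)) ?_ ?_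
      · intro i hi
        simp only [Finset.mem_insert, not_or] at hi
        rw [h2 i hi.2, Function.update_of_ne hi.1]
      · intro i hi
        rcases Finset.mem_insert.1 hi with rfl | hi
        · refine (Finset.card_le_card (h1 i)).trans ?_
          simpa using hW1
        · exact h3 i hi)
    refine good_mono this fun s _ => ?_
    rw [mul_add]; omega


/-! ### Extending by one position -/

open Classical in
lemma good_flip_known {t : ℕ} (ht : t < n) {V : ℕ → Finset (Fin n)} {c : Fin n → Bool}
    {Y : Finset (Secret n)} (hY : Y ⊆ Sset t V c) (G : Finset (Fin n))
    (hG : ∀ i < t, ∀ r ∈ V i, r ∉ G) {f : Secret n → ℕ} (b : Bool)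
    (hb : ∀ s ∈ Y, s.1 (s.2 ⟨t, ht⟩) = xor (c (s.2 ⟨t, ht⟩)) b)
    (h1 : Good n q (Y.filter (fun s => s.2 ⟨t, ht⟩ ∈ G)) f)
    (h2 : Good n q (Y.filter (fun s => s.2 ⟨t, ht⟩ ∉ G)) f) :
    Good n q Y (fun s => f s + 1) := by
  cases b
  · refine good_flip ht hY G hG ?_ ?_
    · convert h2 using 1
      refine Finset.filter_congr fun s hs => ?_
      rw [hb s hs]
      by_cases h : s.2 ⟨t, ht⟩ ∈ G <;> simp [h]
    · convert h1 using 1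
      refine Finset.filter_congr fun s hs => ?_
      rw [hb s hs]
      by_cases h : s.2 ⟨t, ht⟩ ∈ G <;> simp [h]
  · refine good_flip ht hY G hG ?_ ?_
    · convert h1 using 1
      refine Finset.filter_congr fun s hs => ?_
      rw [hb s hs]
      by_cases h : s.2 ⟨t, ht⟩ ∈ G <;> simp [h]
    · convert h2 using 1
      refine Finset.filter_congr fun s hs => ?_
      rw [hb s hs]
      by_cases h : s.2 ⟨t, ht⟩ ∈ G <;> simp [h]

open Classical in
lemma ext_set {t : ℕ} (ht : t < n) {V : ℕ → Finset (Fin n)} {c : Fin n → Bool}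
    (G : Finset (Fin n)) (hG : ∀ i < t, ∀ r ∈ V i, r ∉ G) (b : Bool) :
    Sset (t + 1) (Function.update V t G) (fun r => if r ∈ G then xor (c r) b else c r) =
      (Sset t V c).filter (fun s => s.1 (s.2 ⟨t, ht⟩) = xor (c (s.2 ⟨t, ht⟩)) b ∧
        s.2 ⟨t, ht⟩ ∈ G) := by
  ext s
  simp only [Finset.mem_filter, mem_Sset]
  constructor
  · intro h
    have h0 := h ⟨t, ht⟩ (by simp)
    simp only [Function.update_self] at h0
    refine ⟨?_, ?_, h0.1⟩
    · intro i hi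
      have h1 := h i (by omega)
      rw [Function.update_of_ne (by omega)] at h1
      have := hG i hi _ h1.1
      simpa [this] using h1
    · simpa [h0.1] using h0.2
  · rintro ⟨h1, h2, h3⟩ i hi
    by_cases hit : (i : ℕ) = t
    · have : i = ⟨t, ht⟩ := Fin.ext hit
      subst this
      simp [h3, h2]
    · have h4 := h1 i (by omega)
      have := hG i (by omega) _ h4.1
      rw [Function.update_of_ne hit]
      simpa [this] using h4

/-- `r` lies in a candidate set of level at least `l`. -/
def inT (lev : ℕ → ℕ) (t : ℕ) (V : ℕ → Finset (Fin n)) (l : ℕ) (r : Fin n) : Prop :=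
  ∃ i < t, l ≤ lev (V i).card ∧ r ∈ V i

open Classical in
/-- Extra cost when position `t` lies in an old candidate set. -/
noncomputable def extra (lev : ℕ → ℕ) (t : ℕ) (V : ℕ → Finset (Fin n)) (e : ℕ → ℕ) (lam l L : ℕ)
    (r : Fin n) : ℕ :=
  ∑ l' ∈ Finset.Ico l L, if inT lev t V l' r then lam * 2 ^ e l' + 1 else 0

open Classical in
lemma good_exc {t : ℕ} (ht : t < n) {V : ℕ → Finset (Fin n)} {c : Fin n → Bool}
    (hV : Dis t V) (lev e : ℕ → ℕ) (lam L : ℕ) (hlam : n ≤ 2 ^ lam) (base : ℕ) (b : Bool)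
    (hL : ∀ i < t, L ≤ lev (V i).card → (V i).card ≤ 1)
    (hcrowd : ∀ l < L, ((Finset.range t).filter (fun i => lev (V i).card = l)).card ≤ 2 ^ e l)
    (hexit : ∀ (V' : ℕ → Finset (Fin n)) (c' : Fin n → Bool) (G : Finset (Fin n)),
      (∀ i < t, V' i ⊆ V i) → (∀ i < t, ∀ r ∈ V' i, r ∉ G) →
      Good n q (Sset (t + 1) (Function.update V' t G) c') (fun _ => base)) (d : ℕ) :
    ∀ l, l + d = L → ∀ V' : ℕ → Finset (Fin n), (∀ i < t, V' i ⊆ V i) →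
      Good n q (Sset t V' c ∩ Finset.univ.filter (fun s => s.1 (s.2 ⟨t, ht⟩) =
        xor (c (s.2 ⟨t, ht⟩)) b ∧ inT lev t V l (s.2 ⟨t, ht⟩)))
        (fun s => base + extra lev t V e lam l L (s.2 ⟨t, ht⟩)) := by
  induction d with
  | zero =>
    intro l hl V' hV'
    convert good_empty using 1
    rw [Finset.eq_empty_iff_forall_notMem]
    intro s hs
    simp only [Finset.mem_inter, Finset.mem_filter, Finset.mem_univ, true_and] at hs
    obtain ⟨h1, -, i, hi, hli, hr⟩ := hs
    have hc := hL i hi (by omega : L ≤ lev (V i).card)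
    have h2 := hV' i hi (mem_Sset.1 h1 ⟨i, by omega⟩ hi).1
    have h3 := s.2.injective (Finset.card_le_one.1 hc _ hr _ h2)
    simp only [Fin.mk.injEq] at h3
    omega
  | succ d ih =>
    intro l hl V' hV'
    set J := (Finset.range t).filter (fun i => lev (V i).card = l) with hJ
    refine good_mono (good_settle (f := fun s => base + extra lev t V e lam (l + 1) L
      (s.2 ⟨t, ht⟩) + 1) ht.le _ lam hlam J ?_ (hV.mono hV') ?_) ?_
    · intro j hj
      simp only [hJ, Finset.mem_filter, Finset.mem_range] at hj
      exact hj.1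
    · intro V'' h1 h2 h3
      have hV'' : ∀ i < t, V'' i ⊆ V i := fun i hi => (h1 i).trans (hV' i hi)
      let G : Finset (Fin n) := J.biUnion (fun i => V i \ V'' i)
      have hGmem : ∀ r, r ∈ G ↔ ∃ i < t, lev (V i).card = l ∧ r ∈ V i ∧ r ∉ V'' i := by
        intro r
        simp only [G, hJ, Finset.mem_biUnion, Finset.mem_filter, Finset.mem_range,
          Finset.mem_sdiff, and_assoc]
      have hG : ∀ i < t, ∀ r ∈ V'' i, r ∉ G := by
        intro i hi r hr hc
        obtain ⟨j, hj, -, h4, h5⟩ := (hGmem r).1 hc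
        have := hV i hi j hj r (hV'' i hi hr) h4
        subst this
        exact h5 hr
      refine good_flip_known ht Finset.inter_subset_left G hG b ?_ ?_ ?_
      · intro s hs
        simp only [Finset.mem_inter, Finset.mem_filter, Finset.mem_univ, true_and] at hs
        exact hs.2.1
      · have h4 := hexit V'' (fun r => if r ∈ G then xor (c r) b else c r) G hV'' hG
        rw [ext_set ht G hG b] at h4
        have h5 : (Sset t V'' c ∩ Finset.univ.filter (fun s => s.1 (s.2 ⟨t, ht⟩) =
            xor (c (s.2 ⟨t, ht⟩)) b ∧ inT lev t V l (s.2 ⟨t, ht⟩))).filter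
              (fun s => s.2 ⟨t, ht⟩ ∈ G) = (Sset t V'' c).filter (fun s => s.1 (s.2 ⟨t, ht⟩) =
              xor (c (s.2 ⟨t, ht⟩)) b ∧ s.2 ⟨t, ht⟩ ∈ G) := by
          ext s
          simp only [Finset.mem_inter, Finset.mem_filter, Finset.mem_univ, true_and]
          constructor
          · rintro ⟨⟨h6, h7, -⟩, h8⟩
            exact ⟨h6, h7, h8⟩
          · rintro ⟨h6, h7, h8⟩
            obtain ⟨j, hj, h9, h10, -⟩ := (hGmem _).1 h8
            exact ⟨⟨h6, h7, j, hj, h9.ge, h10⟩, h8⟩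
        rw [h5]
        exact good_mono h4 fun s _ => by omega
      · have h4 := ih (l + 1) (by omega) V'' hV''
        convert h4 using 1
        ext s
        simp only [Finset.mem_inter, Finset.mem_filter, Finset.mem_univ, true_and]
        constructor
        · rintro ⟨⟨h6, h7, i, hi, h8, h9⟩, h10⟩
          refine ⟨h6, h7, i, hi, ?_, h9⟩
          by_contra hcon
          apply h10
          rw [hGmem]
          have hli : lev (V i).card = l := by omega
          refine ⟨i, hi, hli, h9, ?_⟩
          intro h11
          have hc := h3 i (by simp [hJ, hi, hli])
          have h12 := (mem_Sset.1 h6 ⟨i, by omega⟩ hi).1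
          have h13 := s.2.injective (Finset.card_le_one.1 hc _ h11 _ h12)
          simp only [Fin.mk.injEq] at h13
          omega
        · rintro ⟨h6, h7, i, hi, h8, h9⟩
          refine ⟨⟨h6, h7, i, hi, by omega, h9⟩, ?_⟩
          intro hc
          obtain ⟨j, hj, h10, h11, -⟩ := (hGmem _).1 hc
          have := hV i hi j hj _ h9 h11
          subst this
          omega
    · intro s hs
      simp only [Finset.mem_inter, Finset.mem_filter, Finset.mem_univ, true_and] at hs
      have hin := hs.2.2
      have : extra lev t V e lam l L (s.2 ⟨t, ht⟩) =
          (lam * 2 ^ e l + 1) + extra lev t V e lam (l + 1) L (s.2 ⟨t, ht⟩) := by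
        unfold extra
        rw [Finset.sum_eq_sum_Ico_succ_bot (by omega : l < L), if_pos hin]
      rw [this]
      have : lam * J.card ≤ lam * 2 ^ e l := Nat.mul_le_mul_left lam (hcrowd l (by omega))
      omega

open Classical in
lemma good_extend {t : ℕ} (ht : t < n) {V : ℕ → Finset (Fin n)} {c : Fin n → Bool}
    (hV : Dis t V) (lev e : ℕ → ℕ) (lam L : ℕ) (hlam : n ≤ 2 ^ lam) (base : ℕ)
    (hL : ∀ i < t, L ≤ lev (V i).card → (V i).card ≤ 1)
    (hcrowd : ∀ l < L, ((Finset.range t).filter (fun i => lev (V i).card = l)).card ≤ 2 ^ e l)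
    (hexit : ∀ (V' : ℕ → Finset (Fin n)) (c' : Fin n → Bool) (G : Finset (Fin n)),
      (∀ i < t, V' i ⊆ V i) → (∀ i < t, ∀ r ∈ V' i, r ∉ G) →
      Good n q (Sset (t + 1) (Function.update V' t G) c') (fun _ => base)) :
    Good n q (Sset t V c) (fun s => base + extra lev t V e lam 0 L (s.2 ⟨t, ht⟩) + 1 + 1) := by
  have hb : ∀ b : Bool, Good n q ((Sset t V c).filter (fun s => s.1 (s.2 ⟨t, ht⟩) =
      xor (c (s.2 ⟨t, ht⟩)) b))
      (fun s => base + extra lev t V e lam 0 L (s.2 ⟨t, ht⟩) + 1) := by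
    intro b
    let G : Finset (Fin n) := Finset.univ.filter (fun r => ¬ ∃ i < t, r ∈ V i)
    have hG : ∀ i < t, ∀ r ∈ V i, r ∉ G := by
      intro i hi r hr hc
      simp only [G, Finset.mem_filter, Finset.mem_univ, true_and] at hc
      exact hc ⟨i, hi, hr⟩
    refine good_flip_known ht (Finset.filter_subset _ _) G hG b ?_ ?_ ?_
    · intro s hs
      exact (Finset.mem_filter.1 hs).2
    · have h4 := hexit V (fun r => if r ∈ G then xor (c r) b else c r) G
        (fun _ _ => subset_rfl) hG
      rw [ext_set ht G hG b, ← Finset.filter_filter] at h4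
      exact good_mono h4 fun s _ => by omega
    · have h4 := good_exc (q := q) (c := c) ht hV lev e lam L hlam base b hL hcrowd hexit L 0
        (by omega) V (fun _ _ => subset_rfl)
      convert h4 using 1
      ext s
      simp only [Finset.mem_inter, Finset.mem_filter, Finset.mem_univ, true_and, G, inT, not_not,
        Nat.zero_le, and_assoc]
  refine good_flip ht subset_rfl ∅ (by simp) ?_ ?_
  · convert hb false using 1
    refine Finset.filter_congr fun s hs => ?_
    simp
  · convert hb true using 1
    refine Finset.filter_congr fun s hs => ?_
    simpa using Bool.eq_not.symm

open Classical in
lemma sum_extra {t : ℕ} (ht : t < n) {V : ℕ → Finset (Fin n)} (c : Fin n → Bool)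
    (hV : Dis t V) (lev e : ℕ → ℕ) (lam L : ℕ)
    (hlev : ∀ i < t, ((V i).card - 1) * 2 ^ (3 * e (lev (V i).card)) < n)
    (hlevL : ∀ v, lev v ≤ L)
    (hL : ∀ i < t, L ≤ lev (V i).card → (V i).card ≤ 1) (he : Monotone e)
    (hcrowd : ∀ l < L, ((Finset.range t).filter (fun i => lev (V i).card = l)).card ≤ 2 ^ e l)
    (hnt : n ≤ lam * (n - t)) (h0 : 2 * lam ^ 2 * L ^ 2 ≤ 2 ^ e 0) :
    ∑ s ∈ Sset t V c, extra lev t V e lam 0 L (s.2 ⟨t, ht⟩) ≤ (Sset t V c).card := by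
  have hlam : 1 ≤ lam := by
    rcases Nat.eq_zero_or_pos lam with h | h
    · subst h; omega
    · exact h
  set N : ℕ → ℕ := fun l => ((Sset t V c).filter (fun s => inT lev t V l (s.2 ⟨t, ht⟩))).card
    with hN
  have hsum : ∑ s ∈ Sset t V c, extra lev t V e lam 0 L (s.2 ⟨t, ht⟩) =
      ∑ l ∈ Finset.Ico 0 L, N l * (lam * 2 ^ e l + 1) := by
    unfold extra
    rw [Finset.sum_comm]
    refine Finset.sum_congr rfl fun l _ => ?_
    rw [← Finset.sum_filter, Finset.sum_const, smul_eq_mul]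
  have hcard : ∀ l < L, (2 ^ e l) ^ 2 * N l ≤ L * lam * (Sset t V c).card := by
    intro l hl
    -- sum of sizes
    have hA : (2 ^ e l) ^ 2 * ∑ i ∈ (Finset.range t).filter (fun i => l ≤ lev (V i).card),
        ((V i).card - 1) ≤ L * n := by
      rw [← Finset.sum_fiberwise_of_maps_to (t := Finset.range (L + 1))
        (g := fun i => lev (V i).card)
        (fun i _ => Finset.mem_range.2 (by have := hlevL (V i).card; omega)), Finset.mul_sum,
        Finset.sum_range_succ]
      have hlast : ∑ i ∈ ((Finset.range t).filter (fun i => l ≤ lev (V i).card)).filter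
          (fun i => lev (V i).card = L), ((V i).card - 1) = 0 := by
        refine Finset.sum_eq_zero fun i hi => ?_
        have := hL i (by simpa using (Finset.mem_filter.1 (Finset.mem_filter.1 hi).1).1)
          (Finset.mem_filter.1 hi).2.ge
        omega
      rw [hlast, mul_zero, add_zero]
      have : L * n = ∑ _l ∈ Finset.range L, n := by simp
      rw [this]
      refine Finset.sum_le_sum fun l' hl' => ?_
      have hl' := Finset.mem_range.1 hl'
      by_cases hll : l ≤ l'
      swap
      · rw [Finset.sum_eq_zero]
        · simp
        · intro i hi
          simp only [Finset.mem_filter] at hi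
          omega
      have hpos : 0 < 2 ^ e l' := by positivity
      refine Nat.le_of_mul_le_mul_left ?_ hpos
      have hmm : (2 : ℕ) ^ e l ≤ 2 ^ e l' := Nat.pow_le_pow_right (by norm_num) (he hll)
      calc 2 ^ e l' * ((2 ^ e l) ^ 2 * ∑ i ∈ ((Finset.range t).filter
            (fun i => l ≤ lev (V i).card)).filter (fun i => lev (V i).card = l'), ((V i).card - 1))
          ≤ 2 ^ e l' * ((2 ^ e l') ^ 2 * ∑ i ∈ ((Finset.range t).filter
            (fun i => l ≤ lev (V i).card)).filter (fun i => lev (V i).card = l'),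
              ((V i).card - 1)) := by gcongr
        _ = ∑ i ∈ ((Finset.range t).filter (fun i => l ≤ lev (V i).card)).filter
              (fun i => lev (V i).card = l'), ((V i).card - 1) * 2 ^ (3 * e l') := by
            rw [Finset.mul_sum, Finset.mul_sum]
            refine Finset.sum_congr rfl fun i _ => ?_
            ring
        _ ≤ ∑ i ∈ ((Finset.range t).filter (fun i => l ≤ lev (V i).card)).filter
              (fun i => lev (V i).card = l'), n := by
            refine Finset.sum_le_sum fun i hi => ?_
            simp only [Finset.mem_filter, Finset.mem_range] at hi
            have := hlev i hi.1.1
            rw [hi.2] at this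
            exact this.le
        _ ≤ 2 ^ e l' * n := by
            rw [Finset.sum_const, smul_eq_mul]
            refine Nat.mul_le_mul_right _ (le_trans (Finset.card_le_card ?_) (hcrowd l' hl'))
            intro i hi
            simp only [Finset.mem_filter] at hi ⊢
            exact ⟨hi.1.1, hi.2⟩
    have hB : (n - t) * N l ≤ (∑ i ∈ (Finset.range t).filter (fun i => l ≤ lev (V i).card),
        ((V i).card - 1)) * (Sset t V c).card := by
      rw [Finset.sum_mul]
      have : N l ≤ ∑ i ∈ (Finset.range t).filter (fun i => l ≤ lev (V i).card),
          ((Sset t V c).filter (fun s => s.2 ⟨t, ht⟩ ∈ V i)).card := by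
        refine le_trans (Finset.card_le_card ?_) Finset.card_biUnion_le
        intro s hs
        obtain ⟨h1, i, h2, h3, h4⟩ := Finset.mem_filter.1 hs
        simp only [Finset.mem_filter, Finset.mem_biUnion, Finset.mem_range]
        exact ⟨i, ⟨h2, h3⟩, h1, h4⟩
      refine (Nat.mul_le_mul_left _ this).trans ?_
      rw [Finset.mul_sum]
      refine Finset.sum_le_sum fun i hi => ?_
      exact (card_next ht c hV (by simpa using (Finset.mem_filter.1 hi).1)).le
    have hntpos : 0 < n - t := by omega
    refine Nat.le_of_mul_le_mul_left ?_ hntpos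
    calc (n - t) * ((2 ^ e l) ^ 2 * N l) = (2 ^ e l) ^ 2 * ((n - t) * N l) := by ring
      _ ≤ (2 ^ e l) ^ 2 * ((∑ i ∈ (Finset.range t).filter (fun i => l ≤ lev (V i).card),
        ((V i).card - 1)) * (Sset t V c).card) := Nat.mul_le_mul_left _ hB
      _ = ((2 ^ e l) ^ 2 * ∑ i ∈ (Finset.range t).filter (fun i => l ≤ lev (V i).card),
        ((V i).card - 1)) * (Sset t V c).card := by ring
      _ ≤ (L * n) * (Sset t V c).card := Nat.mul_le_mul_right _ hA
      _ ≤ (L * (lam * (n - t))) * (Sset t V c).card := by gcongr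
      _ = _ := by ring
  rw [hsum]
  have hpos : 0 < 2 ^ e 0 := by positivity
  refine Nat.le_of_mul_le_mul_left ?_ hpos
  rw [Finset.mul_sum]
  calc ∑ l ∈ Finset.Ico 0 L, 2 ^ e 0 * (N l * (lam * 2 ^ e l + 1))
      ≤ ∑ l ∈ Finset.Ico 0 L, 2 * lam ^ 2 * L * (Sset t V c).card := by
        refine Finset.sum_le_sum fun l hl => ?_
        have h1 : (2 : ℕ) ^ e 0 ≤ 2 ^ e l := Nat.pow_le_pow_right (by norm_num) (he (Nat.zero_le l))
        have h2 : lam * 2 ^ e l + 1 ≤ 2 * lam * 2 ^ e l := by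
          have : 1 ≤ lam * 2 ^ e l := Nat.mul_pos hlam (by positivity)
          have h3 : 2 * lam * 2 ^ e l = lam * 2 ^ e l + lam * 2 ^ e l := by ring
          omega
        calc 2 ^ e 0 * (N l * (lam * 2 ^ e l + 1)) ≤ 2 ^ e l * (N l * (2 * lam * 2 ^ e l)) := by
              gcongr
          _ = 2 * lam * ((2 ^ e l) ^ 2 * N l) := by ring
          _ ≤ 2 * lam * (L * lam * (Sset t V c).card) :=
              Nat.mul_le_mul_left _ (hcard l (Finset.mem_Ico.1 hl).2)
          _ = _ := by ring
    _ = (2 * lam ^ 2 * L ^ 2) * (Sset t V c).card := by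
        rw [Finset.sum_const, Nat.card_Ico, smul_eq_mul]
        simp only [Nat.sub_zero]
        ring
    _ ≤ _ := Nat.mul_le_mul_right _ h0


/-! ### The main potential argument -/

/-- Level of a candidate set of size `v`. -/
def lev (n : ℕ) (e : ℕ → ℕ) (L v : ℕ) : ℕ :=
  Nat.findGreatest (fun l => (v - 1) * 2 ^ (3 * e l) < n) L

/-- Potential of a candidate set of size `v`. -/
def phi (n : ℕ) (e : ℕ → ℕ) (L v : ℕ) : ℕ := 2 * (L - lev n e L v)

lemma lev_le (e : ℕ → ℕ) (L v : ℕ) : lev n e L v ≤ L := Nat.findGreatest_le L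

lemma le_lev {e : ℕ → ℕ} {L v l : ℕ} (hl : l ≤ L) (h : (v - 1) * 2 ^ (3 * e l) < n) :
    l ≤ lev n e L v := Nat.le_findGreatest hl h

lemma lev_spec {e : ℕ → ℕ} {L v : ℕ} (h : (v - 1) * 2 ^ (3 * e 0) < n) :
    (v - 1) * 2 ^ (3 * e (lev n e L v)) < n :=
  Nat.findGreatest_spec (P := fun l => (v - 1) * 2 ^ (3 * e l) < n) (Nat.zero_le L) h

lemma lev_anti {e : ℕ → ℕ} {L v w : ℕ} (hvw : w ≤ v) :
    lev n e L v ≤ lev n e L w := by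
  rcases Nat.eq_zero_or_pos (lev n e L v) with h | h
  · omega
  · refine le_lev (lev_le _ _ _) ?_
    have := Nat.findGreatest_of_ne_zero (P := fun l => (v - 1) * 2 ^ (3 * e l) < n) (n := L)
      (m := lev n e L v) rfl (by omega)
    refine lt_of_le_of_lt ?_ this
    exact Nat.mul_le_mul_right _ (by omega)

lemma phi_mono {e : ℕ → ℕ} {L v w : ℕ} (hvw : w ≤ v) : phi n e L w ≤ phi n e L v := by
  have := lev_anti (n := n) (e := e) (L := L) hvw
  unfold phi
  omega

open Classical in
lemma block_step {t : ℕ} (ht : t ≤ n) {V : ℕ → Finset (Fin n)} {c : Fin n → Bool}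
    (hV : Dis t V) (e : ℕ → ℕ) (L l K : ℕ) (hl : l < L) (hstep : ∀ l, 3 * e (l + 1) ≤ 4 * e l)
    (hsz : ∀ i < t, ((V i).card - 1) * 2 ^ (3 * e 0) < n) (hne : ∀ i < t, (V i).Nonempty)
    (hcrowd : 2 ^ e l ≤ ((Finset.range t).filter (fun i => lev n e L (V i).card = l)).card)
    (ih : ∀ V' : ℕ → Finset (Fin n), (∀ i < t, V' i ⊆ V i) →
      ∑ i ∈ Finset.range t, (phi n e L (V' i).card + (V' i).card) <
        ∑ i ∈ Finset.range t, (phi n e L (V i).card + (V i).card) →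
      Good n q (Sset t V' c) (fun _ => K + ∑ i ∈ Finset.range t, phi n e L (V' i).card)) :
    Good n q (Sset t V c) (fun _ => K + ∑ i ∈ Finset.range t, phi n e L (V i).card) := by
  set m := 2 ^ e l with hm
  have hmpos : 1 ≤ m := Nat.one_le_two_pow
  obtain ⟨I, hIsub, hIcard⟩ := Finset.exists_subset_card_eq hcrowd
  have hI : ∀ i ∈ I, i < t ∧ lev n e L (V i).card = l := by
    intro i hi
    simpa using hIsub hi
  have hA : ∀ i : ℕ, ∃ A ⊆ V i, i < t → A.card = ((V i).card - 1) / m + 1 := by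
    intro i
    by_cases hi : i < t
    · have h1 := (hne i hi).card_pos
      have h2 : ((V i).card - 1) / m ≤ (V i).card - 1 := Nat.div_le_self _ _
      obtain ⟨A, h3, h4⟩ := Finset.exists_subset_card_eq (s := V i)
        (n := ((V i).card - 1) / m + 1) (by omega)
      exact ⟨A, h3, fun _ => h4⟩
    · exact ⟨∅, by simp, fun h => absurd h hi⟩
  choose A hAsub hAcard using hA
  let F : ℕ → Finset (Fin n) := fun i => if i ∈ I then A i else ∅
  have hF : ∀ i < t, F i ⊆ V i := by
    intro i _
    simp only [F]
    split_ifs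
    · exact hAsub i
    · simp
  have hFI : ∀ i ∈ I, F i = A i := fun i hi => by simp [F, hi]
  set Φ := K + ∑ i ∈ Finset.range t, phi n e L (V i).card with hΦ
  set N := Sset t (splitV V F t) c with hN
  have hNsub : N ⊆ Sset t V c := by
    intro s hs
    rw [hN, mem_Sset] at hs
    rw [mem_Sset]
    intro i hi
    exact ⟨splitV_sub hF t i hi (hs i hi).1, (hs i hi).2⟩
  have hdiv : ∀ i ∈ I, (V i).card ≤ m * (F i).card := by
    intro i hi
    rw [hFI i hi, hAcard i (hI i hi).1]
    have := Nat.div_add_mod ((V i).card - 1) m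
    have h2 := Nat.mod_lt ((V i).card - 1) (by omega : m > 0)
    rw [mul_add]
    omega
  have hNcard : 2 * N.card ≤ (Sset t V c).card := by
    have h1 := card_none ht c hV hF m I (fun i hi => ⟨(hI i hi).1, hdiv i hi⟩)
    have h2 : Sset t (fun j => if j ∈ I then V j \ F j else V j) c = N := by
      ext s
      rw [hN, mem_Sset, mem_Sset]
      refine forall_congr' fun j => forall_congr' fun hj => ?_
      have : (if (j : ℕ) ∈ I then V j \ F j else V j) = splitV V F t j := by
        simp only [splitV, hj, if_true]
        by_cases hjI : (j : ℕ) ∈ I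
        · simp [hjI]
        · simp [F, hjI]
      rw [this]
    rw [h2, hIcard] at h1
    have h3 := two_mul_pow_le m hmpos
    have hpos : 0 < m ^ m := by positivity
    refine Nat.le_of_mul_le_mul_right ?_ hpos
    calc 2 * N.card * m ^ m = 2 * (N.card * m ^ m) := by ring
      _ ≤ 2 * ((m - 1) ^ m * (Sset t V c).card) := Nat.mul_le_mul_left _ h1
      _ = (2 * (m - 1) ^ m) * (Sset t V c).card := by ring
      _ ≤ m ^ m * (Sset t V c).card := Nat.mul_le_mul_right _ h3
      _ = _ := mul_comm _ _
  obtain ⟨i0, hi0⟩ : I.Nonempty := by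
    rw [← Finset.card_pos, hIcard]; omega
  have hΦ2 : ∀ i ∈ I, 2 ≤ phi n e L (V i).card := by
    intro i hi
    unfold phi
    rw [(hI i hi).2]
    omega
  have hΦge : 2 ≤ Φ := by
    have h1 := Finset.single_le_sum (f := fun i => phi n e L (V i).card)
      (fun i _ => Nat.zero_le _) (Finset.mem_range.2 (hI i0 hi0).1)
    have h2 := hΦ2 i0 hi0
    omega
  let f : Secret n → ℕ := fun s => if s ∈ N then Φ else Φ - 2
  have hgood : Good n q (Sset t V c ∩ Finset.univ) (fun s => f s + 1) := by
    refine good_split ht hV hF _ ?_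
    intro k hk
    rw [Finset.inter_univ]
    have hsubk := splitV_sub hF k
    have hcardk : ∀ i < t, (splitV V F k i).card ≤ (V i).card :=
      fun i hi => Finset.card_le_card (hsubk i hi)
    rcases Nat.lt_or_eq_of_le hk with hkt | hkt
    swap
    · subst hkt
      have := ih (splitV V F k) hsubk (by
        refine Finset.sum_lt_sum (fun i hi => ?_) ⟨i0, Finset.mem_range.2 (hI i0 hi0).1, ?_⟩
        · have h1 := hcardk i (Finset.mem_range.1 hi)
          have h2 := phi_mono (n := n) (e := e) (L := L) h1
          omega
        · have h1 := hcardk i0 (hI i0 hi0).1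
          have h2 := phi_mono (n := n) (e := e) (L := L) h1
          have h3 : (splitV V F k i0).card < (V i0).card := by
            simp only [splitV, (hI i0 hi0).1, if_true]
            rw [Finset.card_sdiff_of_subset (hF i0 (hI i0 hi0).1), hFI i0 hi0,
              hAcard i0 (hI i0 hi0).1]
            have := (hne i0 (hI i0 hi0).1).card_pos
            generalize ((V i0).card - 1) / m = x
            omega
          omega)
      refine good_mono this fun s hs => ?_
      simp only [f, hN, hs, if_true, hΦ]
      refine Nat.add_le_add_left (Finset.sum_le_sum fun i hi => ?_) _
      exact phi_mono (hcardk i (Finset.mem_range.1 hi))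
    · by_cases hkI : k ∈ I
      swap
      · have : Sset t (splitV V F k) c = ∅ := by
          rw [Finset.eq_empty_iff_forall_notMem]
          intro s hs
          have := (mem_Sset.1 hs ⟨k, by omega⟩ hkt).1
          simp [splitV, F, hkI] at this
        rw [this]
        exact good_empty
      · have hphik : phi n e L (splitV V F k k).card + 2 ≤ phi n e L (V k).card := by
          have h1 : splitV V F k k = A k := by simp [splitV, hFI k hkI]
          have h2 := lev_spec (L := L) (hsz k hkt)
          rw [(hI k hkI).2] at h2
          have h3 : l + 1 ≤ lev n e L (A k).card := by
            refine le_lev hl (lt_of_le_of_lt ?_ h2)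
            rw [hAcard k hkt, Nat.add_sub_cancel]
            calc ((V k).card - 1) / m * 2 ^ (3 * e (l + 1))
                ≤ ((V k).card - 1) / m * 2 ^ (4 * e l) :=
                  Nat.mul_le_mul_left _ (Nat.pow_le_pow_right (by norm_num) (hstep l))
              _ = (((V k).card - 1) / m * m) * 2 ^ (3 * e l) := by rw [hm]; ring
              _ ≤ ((V k).card - 1) * 2 ^ (3 * e l) :=
                  Nat.mul_le_mul_right _ (Nat.div_mul_le_self _ _)
          rw [h1]
          unfold phi
          rw [(hI k hkI).2]
          omega
        have hkr : k ∈ Finset.range t := Finset.mem_range.2 hkt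
        have hsumphi : ∑ i ∈ Finset.range t, phi n e L (splitV V F k i).card + 2 ≤
            ∑ i ∈ Finset.range t, phi n e L (V i).card := by
          rw [← Finset.add_sum_erase _ _ hkr, ← Finset.add_sum_erase (Finset.range t)
            (fun i => phi n e L (V i).card) hkr]
          have : ∑ i ∈ (Finset.range t).erase k, phi n e L (splitV V F k i).card ≤
              ∑ i ∈ (Finset.range t).erase k, phi n e L (V i).card := by
            refine Finset.sum_le_sum fun i hi => phi_mono (hcardk i ?_)
            exact Finset.mem_range.1 (Finset.mem_of_mem_erase hi)
          omega
        have := ih (splitV V F k) hsubk (by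
          have h1 : ∑ i ∈ Finset.range t, (splitV V F k i).card ≤
              ∑ i ∈ Finset.range t, (V i).card :=
            Finset.sum_le_sum fun i hi => hcardk i (Finset.mem_range.1 hi)
          rw [Finset.sum_add_distrib, Finset.sum_add_distrib]
          omega)
        refine good_mono this fun s hs => ?_
        have : Φ - 2 ≤ f s := by
          simp only [f]
          split_ifs <;> omega
        omega
  rw [Finset.inter_univ] at hgood
  refine good_sum hgood ?_
  have h1 : ∑ s ∈ Sset t V c, (f s + 2) = (Sset t V c).card * Φ + 2 * N.card := by
    have : ∀ s ∈ Sset t V c, f s + 2 = Φ + if s ∈ N then 2 else 0 := by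
      intro s _
      simp only [f]
      split_ifs <;> omega
    rw [Finset.sum_congr rfl this, Finset.sum_add_distrib, ← Finset.sum_filter,
      Finset.filter_mem_eq_inter, Finset.inter_eq_right.2 hNsub]
    simp [mul_comm]
  simp only [Finset.sum_add_distrib, Finset.sum_const, smul_eq_mul] at h1 ⊢
  omega

lemma Sset_empty {t : ℕ} (ht : t ≤ n) {V : ℕ → Finset (Fin n)} (c : Fin n → Bool)
    (h : ¬ ∀ i < t, (V i).Nonempty) : Sset t V c = ∅ := by
  push Not at h
  obtain ⟨i, hi, h⟩ := h
  rw [Finset.eq_empty_iff_forall_notMem]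
  intro s hs
  have := (mem_Sset.1 hs ⟨i, by omega⟩ hi).1
  simp [h] at this

open Classical in
theorem main_good (hq : q ≤ n) (hn : 1 ≤ n) (e : ℕ → ℕ) (L lam : ℕ) (hlam : n ≤ 2 ^ lam)
    (hL3 : lam ≤ 3 * e L) (hlt : ∀ l < L, 3 * e l < lam) (he : Monotone e)
    (hstep : ∀ l, 3 * e (l + 1) ≤ 4 * e l) (hnq : n ≤ lam * (n - q))
    (h0 : 2 * lam ^ 2 * L ^ 2 ≤ 2 ^ e 0) (d : ℕ) :
    ∀ t, t + d = q → ∀ (M : ℕ) (V : ℕ → Finset (Fin n)) (c : Fin n → Bool), Dis t V →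
      (∀ i < t, ((V i).card - 1) * 2 ^ (3 * e 0) < n) →
      ∑ i ∈ Finset.range t, (phi n e L (V i).card + (V i).card) < M →
      Good n q (Sset t V c) (fun _ => (3 + 3 * e 0 + 2 * L) * d + lam * (L * 2 ^ (lam / 3)) +
        ∑ i ∈ Finset.range t, phi n e L (V i).card) := by
  have hLs : ∀ v, (v - 1) * 2 ^ (3 * e 0) < n → L ≤ lev n e L v → v ≤ 1 := by
    intro v hs hv
    by_contra hcon
    have h1 : lev n e L v = L := le_antisymm (lev_le _ _ _) hv
    have this := lev_spec (L := L) hs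
    rw [h1] at this
    have h2 : 2 ^ lam ≤ 2 ^ (3 * e L) := Nat.pow_le_pow_right (by norm_num) hL3
    have h3 : 2 ^ (3 * e L) ≤ (v - 1) * 2 ^ (3 * e L) := Nat.le_mul_of_pos_left _ (by omega)
    omega
  induction d with
  | zero =>
    intro t htq M
    induction M with
    | zero => intro V c _ _ h; omega
    | succ M ih =>
      intro V c hV hsz hM
      by_cases hne : ∀ i < t, (V i).Nonempty
      swap
      · rw [Sset_empty (by omega) c hne]; exact good_empty
      by_cases hcr : ∃ l < L, 2 ^ e l ≤
          ((Finset.range t).filter (fun i => lev n e L (V i).card = l)).card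
      · obtain ⟨l, hl, hcr⟩ := hcr
        refine block_step (by omega) hV e L l _ hl hstep hsz hne hcr ?_
        intro V' hV' hlt'
        refine ih V' c (hV.mono hV') (fun i hi => lt_of_le_of_lt ?_ (hsz i hi)) (by omega)
        exact Nat.mul_le_mul_right _ (Nat.sub_le_sub_right (Finset.card_le_card (hV' i hi)) 1)
      · push Not at hcr
        let J := (Finset.range t).filter (fun i => 1 < (V i).card)
        have hJc : J.card ≤ L * 2 ^ (lam / 3) := by
          have hmaps : ∀ i ∈ J, lev n e L (V i).card ∈ Finset.range L := by
            intro i hi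
            simp only [J, Finset.mem_filter, Finset.mem_range] at hi ⊢
            by_contra hcon
            have := hLs _ (hsz i hi.1) (by omega)
            omega
          rw [Finset.card_eq_sum_card_fiberwise hmaps]
          have : L * 2 ^ (lam / 3) = ∑ _l ∈ Finset.range L, 2 ^ (lam / 3) := by simp
          rw [this]
          refine Finset.sum_le_sum fun l hl => ?_
          have hl := Finset.mem_range.1 hl
          have h1 : 2 ^ e l ≤ 2 ^ (lam / 3) :=
            Nat.pow_le_pow_right (by norm_num) (by have := hlt l hl; omega)
          refine le_trans (le_trans (Finset.card_le_card ?_) (hcr l hl).le) h1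
          intro i hi
          simp only [J, Finset.mem_filter, Finset.mem_range, Finset.mem_coe] at hi ⊢
          exact ⟨hi.1.1, hi.2⟩
        have hgood : Good n q (Sset t V c ∩ Finset.univ) (fun _ => 0 + lam * J.card) := by
          refine good_settle (f := fun _ => 0) (by omega) Finset.univ lam hlam J ?_ hV ?_
          · intro j hj
            simp only [J, Finset.mem_filter, Finset.mem_range] at hj
            exact hj.1
          · intro V' h1 h2 h3
            rw [Finset.inter_univ]
            refine good_ident ?_
            intro s hs s' hs' j hj
            have hc : (V' j).card ≤ 1 := by
              by_cases hjJ : (j : ℕ) ∈ J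
              · exact h3 j hjJ
              · rw [h2 j hjJ]
                simp only [J, Finset.mem_filter, Finset.mem_range] at hjJ
                by_contra hcon
                exact hjJ ⟨by omega, by omega⟩
            have h4 := mem_Sset.1 hs j (by omega)
            have h5 := mem_Sset.1 hs' j (by omega)
            have h6 := Finset.card_le_one.1 hc _ h5.1 _ h4.1
            refine ⟨h6, ?_⟩
            rw [h4.2, ← h6, h5.2]
        rw [Finset.inter_univ] at hgood
        refine good_mono hgood fun s _ => ?_
        have := Nat.mul_le_mul_left lam hJc
        omega
  | succ d ihd =>
    intro t htq M
    induction M with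
    | zero => intro V c _ _ h; omega
    | succ M ih =>
      intro V c hV hsz hM
      by_cases hne : ∀ i < t, (V i).Nonempty
      swap
      · rw [Sset_empty (by omega) c hne]; exact good_empty
      by_cases hcr : ∃ l < L, 2 ^ e l ≤
          ((Finset.range t).filter (fun i => lev n e L (V i).card = l)).card
      · obtain ⟨l, hl, hcr⟩ := hcr
        refine block_step (by omega) hV e L l _ hl hstep hsz hne hcr ?_
        intro V' hV' hlt'
        refine ih V' c (hV.mono hV') (fun i hi => lt_of_le_of_lt ?_ (hsz i hi)) (by omega)
        exact Nat.mul_le_mul_right _ (Nat.sub_le_sub_right (Finset.card_le_card (hV' i hi)) 1)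
      · push Not at hcr
        have ht : t < n := by omega
        set Fi := lam * (L * 2 ^ (lam / 3)) with hFi
        set Pot := ∑ i ∈ Finset.range t, phi n e L (V i).card with hPot
        set B := (3 + 3 * e 0 + 2 * L) * d + Fi + Pot + 2 * L with hB
        have hext := good_extend (q := q) (c := c) ht hV (lev n e L) e lam L hlam (B + 3 * e 0)
          (fun i hi => hLs _ (hsz i hi)) (fun l hl => (hcr l hl).le) (by
            intro V' c' G hV' hG
            have hD : Dis (t + 1) (Function.update V' t G) := by
              intro i hi j hj r hri hrj
              by_cases h1 : i = t <;> by_cases h2 : j = t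
              · omega
              · subst h1
                rw [Function.update_self] at hri
                rw [Function.update_of_ne h2] at hrj
                exact absurd hri (hG j (by omega) r hrj)
              · subst h2
                rw [Function.update_self] at hrj
                rw [Function.update_of_ne h1] at hri
                exact absurd hrj (hG i (by omega) r hri)
              · rw [Function.update_of_ne h1] at hri
                rw [Function.update_of_ne h2] at hrj
                exact hV i (by omega) j (by omega) r (hV' i (by omega) hri) (hV' j (by omega) hrj)
            have := good_refine (q := q) (n := n) (t := t + 1) (c := c') (f := fun _ => B)
              (by omega) Finset.univ (i := t) (by omega) (3 * e 0) hD (by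
                intro W hW hWc
                rw [Function.update_self] at hW hWc
                rw [Finset.inter_univ, Function.update_idem]
                have hsub : ∀ i < t, (Function.update V' t W i) ⊆ V i := by
                  intro i hi
                  rw [Function.update_of_ne (by omega)]
                  exact hV' i hi
                have h1 := ihd (t + 1) (by omega) _ (Function.update V' t W) c' (by
                    refine hD.mono fun i hi => ?_
                    by_cases hit : i = t
                    · subst hit; simpa using hW
                    · simp [hit]) (by
                    intro i hi
                    by_cases hit : i = t
                    · subst hit
                      rw [Function.update_self]
                      have h2 : G.card ≤ n := by simpa using G.card_le_univ
                      omega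
                    · refine lt_of_le_of_lt ?_ (hsz i (by omega))
                      exact Nat.mul_le_mul_right _ (Nat.sub_le_sub_right
                        (Finset.card_le_card (hsub i (by omega))) 1)) (Nat.lt_succ_self _)
                refine good_mono h1 fun s _ => ?_
                rw [Finset.sum_range_succ]
                have h2 : ∑ i ∈ Finset.range t, phi n e L (Function.update V' t W i).card ≤ Pot :=
                  Finset.sum_le_sum fun i hi =>
                    phi_mono (Finset.card_le_card (hsub i (Finset.mem_range.1 hi)))
                have h3 : phi n e L (Function.update V' t W t).card ≤ 2 * L := by
                  unfold phi; omega
                omega)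
            rwa [Finset.inter_univ] at this)
        refine good_sum hext ?_
        have hse := sum_extra ht c hV (lev n e L) e lam L
          (fun i hi => lev_spec (hsz i hi)) (fun v => lev_le _ _ _) (fun i hi => hLs _ (hsz i hi))
          he (fun l hl => (hcr l hl).le)
          (hnq.trans (Nat.mul_le_mul_left _ (by omega))) h0
        simp only [Finset.sum_add_distrib, Finset.sum_const, smul_eq_mul]
        generalize (Sset t V c).card = S at *
        calc S * B + S * (3 * e 0) + ∑ s ∈ Sset t V c, extra (lev n e L) t V e lam 0 L (s.2 ⟨t, ht⟩) + S * 1 + S * 1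
            ≤ S * B + S * (3 * e 0) + S + S * 1 + S * 1 := by omega
          _ = _ := by rw [hB]; ring

/-! ### Choice of the parameters -/

/-- The exponents of the block sizes. -/
def eseq (a : ℕ) : ℕ → ℕ
  | 0 => a
  | l + 1 => eseq a l + eseq a l / 3

lemma eseq_mono (a : ℕ) : Monotone (eseq a) :=
  monotone_nat_of_le_succ fun l => by simp only [eseq]; omega

lemma eseq_four {a : ℕ} (ha : 9 ≤ a) (l : ℕ) : 2 * eseq a l ≤ eseq a (l + 4) := by
  have h : 9 ≤ eseq a l := ha.trans (eseq_mono a (Nat.zero_le l))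
  simp only [eseq]
  omega

lemma eseq_pow {a : ℕ} (ha : 9 ≤ a) (k : ℕ) : 2 ^ k * a ≤ eseq a (4 * k) := by
  induction k with
  | zero => simp [eseq]
  | succ k ih =>
    have := eseq_four ha (4 * k)
    rw [mul_add, mul_one, pow_succ]
    linarith

lemma good_univ (hn : 4 ≤ n) (hq : q ≤ n) (hnq : n ≤ Nat.clog 2 n * (n - q)) :
    Good n q Finset.univ (fun _ => 54 * Nat.clog 2 (Nat.clog 2 n) * n) := by
  set lam := Nat.clog 2 n with hlam
  set kap := Nat.clog 2 lam with hkap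
  have hlam2 : 2 ≤ lam := by
    have : Nat.clog 2 4 ≤ Nat.clog 2 n := Nat.clog_mono_right 2 hn
    have h4 : Nat.clog 2 4 = 2 := by
      have := Nat.clog_pow 2 2 (by norm_num)
      simpa using this
    omega
  have hkap1 : 1 ≤ kap := Nat.clog_pos (by norm_num) hlam2
  have hnlam : n ≤ 2 ^ lam := Nat.le_pow_clog (by norm_num) n
  have hlamn : 2 ^ lam ≤ 2 * n := by
    have h := Nat.pow_pred_clog_lt_self (b := 2) (by norm_num) (x := n) (by omega)
    rw [← hlam] at h
    have h2 : 2 ^ lam = 2 * 2 ^ (lam - 1) := by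
      rw [← pow_succ']; congr 1; omega
    have h3 : 2 ^ lam.pred = 2 ^ (lam - 1) := rfl
    omega
  have hlamk : lam ≤ 2 ^ kap := Nat.le_pow_clog (by norm_num) lam
  have hkl : kap ≤ lam := by
    rw [hkap]
    exact Nat.clog_le_of_le_pow (Nat.lt_two_pow_self).le
  set a := 4 * kap + 5 with ha
  have ha9 : 9 ≤ a := by omega
  have hex : ∃ l, lam ≤ 3 * eseq a l := by
    refine ⟨4 * kap, ?_⟩
    have := eseq_pow ha9 kap
    nlinarith
  set L := Nat.find hex with hLdef
  have hL1 : lam ≤ 3 * eseq a L := Nat.find_spec hex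
  have hL2 : ∀ l < L, 3 * eseq a l < lam := fun l hl => by
    have := Nat.find_min hex hl
    omega
  have hL3 : L ≤ 4 * kap := Nat.find_min' hex (by
    have := eseq_pow ha9 kap
    nlinarith)
  have h0 : 2 * lam ^ 2 * L ^ 2 ≤ 2 ^ eseq a 0 := by
    have h1 : 2 * lam ^ 2 * L ^ 2 ≤ 2 * lam ^ 2 * (4 * lam) ^ 2 := by
      gcongr; omega
    have h2 : 2 * lam ^ 2 * (4 * lam) ^ 2 = 32 * lam ^ 4 := by ring
    have h3 : lam ^ 4 ≤ (2 ^ kap) ^ 4 := by gcongr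
    have h4 : 2 ^ eseq a 0 = 32 * (2 ^ kap) ^ 4 := by
      simp only [eseq, ha]
      rw [← pow_mul, pow_add, mul_comm kap 4]; ring
    omega
  have hmain := main_good (n := n) (q := q) hq (by omega) (eseq a) L lam hnlam hL1 hL2
    (eseq_mono a) (fun l => by simp only [eseq]; omega) hnq h0 q 0 (by omega) 1
    (fun _ => ∅) (fun _ => false) (by intro i hi; omega) (by intro i hi; omega) (by simp)
  have hu : Sset 0 (fun _ => (∅ : Finset (Fin n))) (fun _ => false) = Finset.univ := by
    ext s; simp [mem_Sset]
  rw [hu] at hmain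
  refine good_mono hmain fun s _ => ?_
  simp only [Finset.range_zero, Finset.sum_empty, add_zero, eseq]
  have h1 : (3 + 3 * a + 2 * L) * q ≤ 38 * kap * n := by
    gcongr
    omega
  have h2 : lam * (L * 2 ^ (lam / 3)) ≤ 16 * kap * n := by
    have h3 : lam ≤ 2 * 2 ^ (lam - lam / 3) := by
      have h4 : lam - lam / 3 < 2 ^ (lam - lam / 3) := Nat.lt_two_pow_self
      omega
    have h5 : 2 ^ (lam - lam / 3) * 2 ^ (lam / 3) = 2 ^ lam := by
      rw [← pow_add]; congr 1; omega
    calc lam * (L * 2 ^ (lam / 3)) ≤ (2 * 2 ^ (lam - lam / 3)) * ((4 * kap) * 2 ^ (lam / 3)) := by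
          gcongr
      _ = 8 * kap * (2 ^ (lam - lam / 3) * 2 ^ (lam / 3)) := by ring
      _ = 8 * kap * 2 ^ lam := by rw [h5]
      _ ≤ 8 * kap * (2 * n) := by gcongr
      _ = _ := by ring
  have h3 : 54 * kap * n = 38 * kap * n + 16 * kap * n := by ring
  omega

/-! ### Symmetrization -/

/-- Twisted strategy. -/
def twist (g : List ℕ → Fin n → Bool) (a : Secret n) : List ℕ → Fin n → Bool :=
  fun h r => xor (g h (a.2 r)) (a.1 r)

/-- Twisted secret. -/
def twistS (a s : Secret n) : Secret n :=
  (fun r => xor (s.1 (a.2.symm r)) (a.1 (a.2.symm r)), s.2.trans a.2)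

lemma score_twist (a s : Secret n) (x : Fin n → Bool) :
    score n s.1 s.2 (fun r => xor (x (a.2 r)) (a.1 r)) =
      score n (twistS a s).1 (twistS a s).2 x := by
  unfold score
  congr 1
  ext i
  refine forall_congr' fun j => forall_congr' fun _ => ?_
  simp only [twistS, Equiv.trans_apply, Equiv.symm_apply_apply]
  generalize s.1 (s.2 j) = u
  generalize x (a.2 (s.2 j)) = v
  generalize a.1 (s.2 j) = w
  revert u v w
  decide

lemma hist_twist (g : List ℕ → Fin n → Bool) (a s : Secret n) (k : ℕ) :
    histScores n (twist g a) s.1 s.2 k = histScores n g (twistS a s).1 (twistS a s).2 k := by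
  induction k with
  | zero => rfl
  | succ k ih =>
    rw [histScores, histScores, ih]
    congr 2
    exact score_twist a s _

lemma twistS_inj (s : Secret n) : Function.Injective (fun a => twistS a s) := by
  intro a b h
  simp only [twistS, Prod.mk.injEq] at h
  have h2 : a.2 = b.2 := by
    ext r
    have := Equiv.congr_fun h.2 (s.2.symm r)
    simpa using congrArg Fin.val this
  refine Prod.ext ?_ h2
  funext r
  have := congrFun h.1 (a.2 r)
  rw [← h2] at this
  simpa using this

lemma time_twist {f : Secret n → ℕ} {g : List ℕ → Fin n → Bool} {τ : Secret n → ℕ}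
    (h : ∀ s ∈ (Finset.univ : Finset (Secret n)), ∀ s' ∈ (Finset.univ : Finset (Secret n)),
      (∀ k < τ s, score n s'.1 s'.2 (g (histScores n g s.1 s.2 k)) =
        score n s.1 s.2 (g (histScores n g s.1 s.2 k))) →
      ∀ j : Fin n, (j : ℕ) < q → s'.2 j = s.2 j ∧ s'.1 (s.2 j) = s.1 (s.2 j))
    (a s : Secret n) :
    timeToPrefix n (twist g a) s.1 s.2 q ≤ (τ (twistS a s) : ℕ∞) := by
  refine sInf_le ⟨_, rfl, ?_⟩
  intro z' π' hk j hj
  have := h (twistS a s) (Finset.mem_univ _) (twistS a (z', π')) (Finset.mem_univ _) (by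
    intro k hk'
    have h1 := hk k hk'
    rw [hist_twist] at h1
    have e1 := score_twist a (z', π') (g (histScores n g (twistS a s).1 (twistS a s).2 k))
    have e2 := score_twist a s (g (histScores n g (twistS a s).1 (twistS a s).2 k))
    rw [← e1, ← e2]
    exact h1) j hj
  have h2 : π' j = s.2 j := by
    have := this.1
    simpa [twistS] using this
  refine ⟨h2, ?_⟩
  have := this.2
  simpa [twistS] using this

lemma tsum_map {α β : Type*} (p : PMF α) (G : α → β) (h : β → ENNReal) :
    ∑' b, (p.map G) b * h b = ∑' a, p a * h (G a) := by
  classical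
  simp only [PMF.map_apply, ← ENNReal.tsum_mul_right]
  rw [ENNReal.tsum_comm]
  refine tsum_congr fun a => ?_
  rw [tsum_eq_single (G a)]
  · simp
  · intro b hb
    simp [hb]

lemma exists_pmf {B : ℕ} (hg : Good n q Finset.univ (fun _ => B)) :
    ∃ D : PMF (List ℕ → Fin n → Bool), D.support.Finite ∧
      ∀ (z : Fin n → Bool) (π : Equiv.Perm (Fin n)),
        ∑' g, D g * (timeToPrefix n g z π q : ENNReal) ≤ (B : ENNReal) := by
  obtain ⟨g, τ, h1, h2⟩ := hg
  refine ⟨(PMF.uniformOfFintype (Secret n)).map (twist g), ?_, ?_⟩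
  · rw [PMF.support_map]
    exact (Set.toFinite _).image _
  · intro z π
    rw [tsum_map, tsum_fintype]
    simp only [PMF.uniformOfFintype_apply]
    rw [← Finset.mul_sum]
    have h3 : ∑ a : Secret n, (timeToPrefix n (twist g a) z π q : ENNReal) ≤
        (Fintype.card (Secret n) : ENNReal) * B := by
      calc ∑ a : Secret n, (timeToPrefix n (twist g a) z π q : ENNReal)
          ≤ ∑ a : Secret n, ((τ (twistS a (z, π)) : ℕ) : ENNReal) := by
            refine Finset.sum_le_sum fun a _ => ?_
            have := time_twist (f := fun _ => 0) h1 a (z, π)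
            exact_mod_cast ENat.toENNReal_le.2 this
        _ = ∑ s : Secret n, ((τ s : ℕ) : ENNReal) :=
            (Equiv.ofBijective _ ((Finite.injective_iff_bijective).1
              (twistS_inj (z, π)))).sum_comp (fun s => ((τ s : ℕ) : ENNReal))
        _ ≤ _ := by
            have h4 : ∑ s : Secret n, τ s ≤ Fintype.card (Secret n) * B := by simpa using h2
            exact_mod_cast h4
    calc (Fintype.card (Secret n) : ENNReal)⁻¹ * ∑ a : Secret n, (timeToPrefix n (twist g a) z π q : ENNReal)
        ≤ (Fintype.card (Secret n) : ENNReal)⁻¹ * ((Fintype.card (Secret n) : ENNReal) * B) := by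
          gcongr
      _ = B := by
          rw [← mul_assoc, ENNReal.inv_mul_cancel, one_mul]
          · exact_mod_cast Fintype.card_ne_zero
          · exact ENNReal.natCast_ne_top _

end HP

/-- The first phase: with `q = n − ⌈n / log₂ n⌉`, a randomized strategy determines
`π(1),…,π(q)` and `z_{π(1)},…,z_{π(q)}` in expected `O(n log log n)` queries. -/
theorem randomized_first_phase :
    ∃ C : ℝ, 0 < C ∧ ∀ n : ℕ, 4 ≤ n →
      ∃ D : PMF (List ℕ → Fin n → Bool), D.support.Finite ∧
        ∀ (z : Fin n → Bool) (π : Equiv.Perm (Fin n)),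
          ∑' g, D g * (timeToPrefix n g z π (n - ⌈(n : ℝ) / Real.logb 2 n⌉₊) : ℝ≥0∞) ≤
            ENNReal.ofReal (C * n * Real.logb 2 (Real.logb 2 n)) := by
  refine ⟨200, by norm_num, fun n hn => ?_⟩
  have hn4 : (4 : ℝ) ≤ n := by exact_mod_cast hn
  have hlog2 : 2 ≤ Real.logb 2 n := by
    rw [Real.le_logb_iff_rpow_le (by norm_num) (by linarith)]
    norm_num
    exact hn
  set x := Real.logb 2 n with hx
  have hll : 1 ≤ Real.logb 2 x := by
    rw [Real.le_logb_iff_rpow_le (by norm_num) (by linarith)]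
    simpa using hlog2
  have hc1 : ⌈x⌉₊ = Nat.clog 2 n := Real.natCeil_logb_natCast 2 n
  have hlamle : x ≤ (Nat.clog 2 n : ℝ) := by rw [← hc1]; exact Nat.le_ceil x
  have hlamlt : (Nat.clog 2 n : ℝ) < x + 1 := by
    rw [← hc1]; exact Nat.ceil_lt_add_one (by linarith)
  have hc2 : ⌈Real.logb 2 (Nat.clog 2 n : ℝ)⌉₊ = Nat.clog 2 (Nat.clog 2 n) :=
    Real.natCeil_logb_natCast 2 _
  have hk1 : Real.logb 2 (Nat.clog 2 n : ℝ) ≤ 1 + Real.logb 2 x := by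
    have h1 : Real.logb 2 (2 * x) = 1 + Real.logb 2 x := by
      rw [Real.logb_mul (by norm_num) (by linarith), Real.logb_self_eq_one (by norm_num)]
    rw [← h1]
    exact Real.logb_le_logb_of_le (by norm_num) (by linarith) (by linarith)
  have hk0 : 0 ≤ Real.logb 2 (Nat.clog 2 n : ℝ) := Real.logb_nonneg (by norm_num) (by linarith)
  have hkap : (Nat.clog 2 (Nat.clog 2 n) : ℝ) ≤ 3 * Real.logb 2 x := by
    rw [← hc2]
    have := Nat.ceil_lt_add_one hk0
    linarith
  have hq2 : n ≤ Nat.clog 2 n * (n - (n - ⌈(n : ℝ) / x⌉₊)) := by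
    have h1 : ⌈(n : ℝ) / x⌉₊ ≤ n := by
      rw [Nat.ceil_le]
      exact div_le_self (by linarith) (by linarith)
    have h2 : n - (n - ⌈(n : ℝ) / x⌉₊) = ⌈(n : ℝ) / x⌉₊ := by omega
    rw [h2]
    have h3 : (n : ℝ) ≤ (Nat.clog 2 n : ℝ) * (⌈(n : ℝ) / x⌉₊ : ℝ) := by
      calc (n : ℝ) = x * (n / x) := by field_simp
        _ ≤ (Nat.clog 2 n : ℝ) * (⌈(n : ℝ) / x⌉₊ : ℝ) :=
          mul_le_mul hlamle (Nat.le_ceil _) (by positivity) (by linarith)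
    exact_mod_cast h3
  obtain ⟨D, hD1, hD2⟩ := HP.exists_pmf (HP.good_univ hn (Nat.sub_le _ _) hq2)
  refine ⟨D, hD1, fun z π => (hD2 z π).trans ?_⟩
  rw [← ENNReal.ofReal_natCast]
  refine ENNReal.ofReal_le_ofReal ?_
  push_cast
  have h5 : 54 * (Nat.clog 2 (Nat.clog 2 n) : ℝ) * n ≤ 54 * (3 * Real.logb 2 x) * n := by gcongr
  have h6 : 0 ≤ (n : ℝ) * Real.logb 2 x := by positivity
  nlinarith
end

section
/- Fix n ∈ ℕ, t ≥ 1, queries x^1,…,x^t ∈ {0,1}^n and scores s^1,…,s^t ∈ {0,…,n}, and let V_1,…,V_n be the associated parity candidate sets. Then any two distinct active candidate sets V_i and V_j (i ≠ j) are disjoint: V_i ∩ V_j = ∅. -/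
/-- The parity candidate sets after the first `r` queries. The hidden string is tied to the
permutation by `z_{π(i)} = i mod 2` (1-indexed), so with 0-indexed `i : Fin n` representing
position `i+1`, after a query `x^{r+1} = x r` with score `s r` the set `V_i` is intersected
with `P_{(i+1) mod 2}(x r)` if `i+1 ≤ s r`, with `P_{(s r) mod 2}(x r)` if `i+1 = s r + 1`,
and is unchanged otherwise, where `P_b(x) = {p : x_p = b}`. -/
def parityCand (n : ℕ) (x : ℕ → Fin n → Bool) (s : ℕ → ℕ) : ℕ → Fin n → Finset (Fin n)
  | 0, _ => Finset.univ
  | r + 1, i =>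
      if (i : ℕ) + 1 ≤ s r then
        (parityCand n x s r i).filter (fun p => x r p = decide (((i : ℕ) + 1) % 2 = 1))
      else if (i : ℕ) = s r then
        (parityCand n x s r i).filter (fun p => x r p = decide (s r % 2 = 1))
      else parityCand n x s r i

/-- The maximum score `m = max{s^1,…,s^t}` among the first `t` queries. -/
def maxScore (t : ℕ) (s : ℕ → ℕ) : ℕ := (Finset.range t).sup s

/-- `V_i` (0-indexed `i`, representing 1-indexed position `i+1`) is active:
`i+1 < min{n/3, m}` and for some query `r` the score was `s^r = (i+1) − 1` while all earlier
queries had score `< (i+1) − 1`. -/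
def IsActive (n t : ℕ) (s : ℕ → ℕ) (i : Fin n) : Prop :=
  (((i : ℕ) + 1 : ℝ) < min ((n : ℝ) / 3) ((maxScore t s : ℕ) : ℝ)) ∧
  ∃ r < t, s r = (i : ℕ) ∧ ∀ r' < r, s r' < (i : ℕ)

/-- Membership in the final candidate set imposes the constraint of every earlier query. -/
theorem parityCand_mem (n : ℕ) (x : ℕ → Fin n → Bool) (s : ℕ → ℕ) (i p : Fin n) (t : ℕ)
    (hp : p ∈ parityCand n x s t i) (r : ℕ) (hr : r < t) :
    ((i : ℕ) + 1 ≤ s r → x r p = decide (((i : ℕ) + 1) % 2 = 1)) ∧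
    ((i : ℕ) = s r → x r p = decide (s r % 2 = 1)) := by
  induction t with
  | zero => omega
  | succ t ih =>
    simp only [parityCand] at hp
    rcases Nat.lt_succ_iff_lt_or_eq.mp hr with h | h
    · refine ih ?_ h
      split_ifs at hp
      · exact (Finset.mem_filter.mp hp).1
      · exact (Finset.mem_filter.mp hp).1
      · exact hp
    · subst h
      constructor
      · intro h
        rw [if_pos h] at hp
        exact (Finset.mem_filter.mp hp).2
      · intro h
        rw [if_neg (by omega), if_pos h] at hp
        exact (Finset.mem_filter.mp hp).2

/-- The ordered case. -/
theorem active_disjoint_of_lt (n t : ℕ) (ht : 1 ≤ t)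
    (x : ℕ → Fin n → Bool) (s : ℕ → ℕ)
    (a b : Fin n) (hb : IsActive n t s b) (hab : (a : ℕ) < b) :
    parityCand n x s t a ∩ parityCand n x s t b = ∅ := by
  rw [Finset.eq_empty_iff_forall_notMem]
  intro p hp
  obtain ⟨hpa, hpb⟩ := Finset.mem_inter.mp hp
  obtain ⟨hm, r, hr, hsr, -⟩ := hb
  by_cases hpar : (a : ℕ) % 2 = (b : ℕ) % 2
  · have h1 := (parityCand_mem n x s a p t hpa r hr).1 (by omega)
    have h2 := (parityCand_mem n x s b p t hpb r hr).2 hsr.symm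
    rw [h1, decide_eq_decide] at h2
    omega
  · have hm' : (b : ℕ) + 1 < maxScore t s := by
      have := lt_of_lt_of_le hm (min_le_right _ _)
      exact_mod_cast this
    obtain ⟨q, hq, hsq⟩ := Finset.exists_mem_eq_sup (Finset.range t)
      (Finset.nonempty_range_iff.mpr (by omega)) s
    have hq' := Finset.mem_range.mp hq
    unfold maxScore at hm'
    have h1 := (parityCand_mem n x s a p t hpa q hq').1 (by omega)
    have h2 := (parityCand_mem n x s b p t hpb q hq').1 (by omega)
    rw [h1, decide_eq_decide] at h2
    omega

/-- Corollary 5.3: any two distinct active parity candidate sets are disjoint. -/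
theorem active_candidate_sets_disjoint (n t : ℕ) (ht : 1 ≤ t)
    (x : ℕ → Fin n → Bool) (s : ℕ → ℕ) (hs : ∀ r < t, s r ≤ n)
    (a b : Fin n) (ha : IsActive n t s a) (hb : IsActive n t s b) (hab : a ≠ b) :
    parityCand n x s t a ∩ parityCand n x s t b = ∅ := by
  rcases lt_or_gt_of_ne (fun h => hab (Fin.ext h) : (a : ℕ) ≠ b) with h | h
  · exact active_disjoint_of_lt n t ht x s a b hb h
  · rw [Finset.inter_comm]
    exact active_disjoint_of_lt n t ht x s b a ha h
end
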